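/- arXiv:1908.00488 — 6 statements merged into one kernel-verified Lean document; each statement's English description precedes it below -/
import Mathlib

section
/- For every integer n ≥ 2, writing 1 = d₁ < d₂ < … < d_{τ(n)} = n for the increasing sequence of divisors of n and p for the smallest prime factor of n, one has G(n) := ∑_{1 ≤ i < τ(n)} d_i/d_{i+1} ≥ τ(n)/(2p). -/
/-!
Let `p` be the smallest prime factor of `n`. If `d` and `p * d` both divide `n`, then the divisor
following `d` is at most `p * d`, so `d` contributes at least `1 / p` to the sum
(`countP_div_le_sum_zip_tail`). At least half of the divisors `d` satisfy `p * d ∣ n`: every other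
divisor is a multiple of `p`, and `d ↦ d / p` maps these injectively to divisors satisfying it
(`card_divisors_le_two_mul`).
-/

open Filter Topology

/-- `G(n) = ∑_{1 ≤ i < τ(n)} d_i / d_{i+1}`, where `d_1 < d_2 < ⋯ < d_{τ(n)}`
are the divisors of `n`. -/
noncomputable def Gfun (n : ℕ) : ℝ :=
  let l := n.divisors.sort (· ≤ ·)
  ((l.zip l.tail).map (fun p => (p.1 : ℝ) / (p.2 : ℝ))).sum

/-- In a strictly increasing list of positive integers, each entry `x` with `P x` has `p * x` in
the list, so its quotient by its successor is at least `1 / p`. -/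
theorem countP_div_le_sum_zip_tail (p : ℕ) (hp : 2 ≤ p) (P : ℕ → Bool) (l : List ℕ)
    (hs : l.Pairwise (· < ·)) (hpos : ∀ x ∈ l, 0 < x) (hP : ∀ x ∈ l, P x → p * x ∈ l) :
    (l.countP P : ℝ) / p ≤ ((l.zip l.tail).map (fun q => (q.1 : ℝ) / (q.2 : ℝ))).sum := by
  induction l with
  | nil => simp
  | cons a t ih =>
    rw [List.pairwise_cons] at hs
    have ha : 0 < a := hpos a (by simp)
    have ih' := ih hs.2 (fun x hx => hpos x (by simp [hx])) (by
      intro x hx hPx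
      rcases List.mem_cons.1 (hP x (by simp [hx]) hPx) with h | h
      · have := hs.1 x hx
        nlinarith
      · exact h)
    have hmem : P a → p * a ∈ t := by
      intro h
      rcases List.mem_cons.1 (hP a (by simp) h) with h | h
      · nlinarith
      · exact h
    cases t with
    | nil =>
      have : ¬ P a := fun h => by simpa using hmem h
      simp [this]
    | cons b t' =>
      have hb : 0 < b := hpos b (by simp)
      simp only [List.tail_cons, List.zip_cons_cons, List.map_cons, List.sum_cons] at ih' ⊢
      rw [List.countP_cons]
      by_cases h : P a
      · have hle : b ≤ p * a := by
          rcases List.mem_cons.1 (hmem h) with h | h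
          · exact h.ge
          · exact ((List.pairwise_cons.1 hs.2).1 _ h).le
        have hle' : (b : ℝ) ≤ p * a := by exact_mod_cast hle
        have h1 : (1 : ℝ) / p ≤ a / b := by
          rw [div_le_div_iff₀ (by positivity) (by positivity)]
          linarith
        simp only [h, if_true]
        push_cast
        rw [add_div]
        linarith
      · have h0 : (0 : ℝ) ≤ a / b := by positivity
        simp only [h]
        simpa using ih'.trans (le_add_of_nonneg_left h0)

theorem card_divisors_le_two_mul (n p : ℕ) (hn : n ≠ 0) (hp : p.Prime) (hpn : p ∣ n) :
    n.divisors.card ≤ 2 * (n.divisors.filter (fun d => p * d ∣ n)).card := by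
  have hdvd : ∀ d ∈ n.divisors.filter (fun d => ¬ p * d ∣ n), p ∣ d := by
    intro d hd
    rw [Finset.mem_filter, Nat.mem_divisors] at hd
    obtain ⟨⟨⟨e, rfl⟩, -⟩, h⟩ := hd
    refine (hp.dvd_mul.1 hpn).resolve_right fun he => h ?_
    rw [mul_comm]
    exact Nat.mul_dvd_mul_left d he
  have hle : (n.divisors.filter (fun d => ¬ p * d ∣ n)).card ≤
      (n.divisors.filter (fun d => p * d ∣ n)).card := by
    refine Finset.card_le_card_of_injOn (fun d => d / p) ?_ ?_
    · intro d hd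
      have h := hdvd d hd
      have hd' := Nat.dvd_of_mem_divisors (Finset.mem_filter.1 hd).1
      simp only [Finset.coe_filter, Set.mem_ofPred_eq, Nat.mem_divisors]
      exact ⟨⟨(Nat.div_dvd_of_dvd h).trans hd', hn⟩, by rwa [Nat.mul_div_cancel' h]⟩
    · intro d hd e he hde
      rw [← Nat.mul_div_cancel' (hdvd d hd), ← Nat.mul_div_cancel' (hdvd e he)]
      exact congrArg (p * ·) hde
  have := Finset.card_filter_add_card_filter_not (s := n.divisors) (fun d => p * d ∣ n)
  omega

theorem Gfun_ge_tau_div_two_minFac (n : ℕ) (hn : 2 ≤ n) :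
    (n.divisors.card : ℝ) / (2 * n.minFac) ≤ Gfun n := by
  have hp : n.minFac.Prime := Nat.minFac_prime (by omega)
  have hcard := card_divisors_le_two_mul n n.minFac (by omega) hp n.minFac_dvd
  have hmain := countP_div_le_sum_zip_tail n.minFac hp.two_le (fun d => n.minFac * d ∣ n)
    (n.divisors.sort (· ≤ ·)) (Finset.sortedLT_sort _).pairwise
    (fun x hx => Nat.pos_of_mem_divisors ((Finset.mem_sort _).1 hx))
    (fun x _ h => (Finset.mem_sort _).2 (Nat.mem_divisors.2 ⟨by simpa using h, by omega⟩))
  have hcount : (n.divisors.sort (· ≤ ·)).countP (fun d => n.minFac * d ∣ n) =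
      (n.divisors.filter (fun d => n.minFac * d ∣ n)).card := by
    rw [← Multiset.coe_countP, Finset.sort_eq, Multiset.countP_eq_card_filter]
    rfl
  rw [hcount] at hmain
  refine le_trans ?_ hmain
  have hp0 : (0 : ℝ) < n.minFac := by exact_mod_cast hp.pos
  have hcard' : (n.divisors.card : ℝ) ≤
      2 * (n.divisors.filter (fun d => n.minFac * d ∣ n)).card := by exact_mod_cast hcard
  rw [div_le_div_iff₀ (by positivity) hp0]
  nlinarith
end

section
/- Let a₁, …, a_n be positive real numbers and for 0 ≤ h ≤ n let σ_h denote the h-th elementary symmetric polynomial of a₁, …, a_n (with σ₀ = 1). Then the sequence {σ_h}_{h=0}^{n} is unimodal: there exists h₀ ∈ {0, …, n} such that σ_{h−1} ≤ σ_h for all 1 ≤ h ≤ h₀ and σ_h ≥ σ_{h+1} for all h₀ ≤ h < n. -/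
/-!
The sequence `σ_h` satisfies the strong log-concavity inequality
`σ_i * σ_{j+2} ≤ σ_{i+1} * σ_{j+1}` for all `i ≤ j`. This form, unlike the diagonal case `i = j`,
propagates by induction on the number of variables through the Pascal-type recurrence
`σ'_{h+1} = σ_{h+1} + a_n * σ_h` by comparing coefficients of `a_n` (`esymmRange_logConcave`).
Let `h₀` be the first index with `σ_{h₀+1} ≤ σ_{h₀}`; it is at most `n` since `σ_{n+1} = 0`.
The sequence increases up to `h₀` by minimality, and taking `i = h₀` above and cancelling
`σ_{h₀} > 0` gives `σ_{j+2} ≤ σ_{j+1}` for every `j ≥ h₀`.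
-/

/-- The `h`-th elementary symmetric polynomial of `a 0, …, a (n - 1)`; it vanishes for `n < h`. -/
noncomputable def esymmRange (a : ℕ → ℝ) (n h : ℕ) : ℝ :=
  ∑ s ∈ Finset.powersetCard h (Finset.range n), ∏ j ∈ s, a j

lemma esymmRange_zero_right (a : ℕ → ℝ) (n : ℕ) : esymmRange a n 0 = 1 := by
  simp [esymmRange]

lemma esymmRange_of_lt (a : ℕ → ℝ) {n h : ℕ} (hn : n < h) : esymmRange a n h = 0 := by
  rw [esymmRange, Finset.powersetCard_eq_empty.2 (by simpa using hn), Finset.sum_empty]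

/-- The subsets of `{0, …, n}` are split according to whether they contain `n`. -/
lemma esymmRange_succ_succ (a : ℕ → ℝ) (n h : ℕ) :
    esymmRange a (n + 1) (h + 1) = esymmRange a n (h + 1) + a n * esymmRange a n h := by
  have hmem : ∀ s ∈ Finset.powersetCard h (Finset.range n), n ∉ s := fun s hs hns => by
    simpa using (Finset.mem_powersetCard.1 hs).1 hns
  unfold esymmRange
  rw [Finset.range_add_one, Finset.powersetCard_succ_insert Finset.notMem_range_self,
    Finset.sum_union, Finset.sum_image, Finset.mul_sum]
  · congr 1
    exact Finset.sum_congr rfl fun s hs => Finset.prod_insert (hmem s hs)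
  · intro s hs t ht hst
    rw [← Finset.erase_insert (hmem s hs), ← Finset.erase_insert (hmem t ht)]
    exact congrArg (fun u => Finset.erase u n) hst
  · rw [Finset.disjoint_left]
    intro s hs hs'
    obtain ⟨t, -, rfl⟩ := Finset.mem_image.1 hs'
    simpa using (Finset.mem_powersetCard.1 hs).1 (Finset.mem_insert_self n t)

lemma esymmRange_nonneg {a : ℕ → ℝ} {n : ℕ} (ha : ∀ j, j < n → 0 < a j) (h : ℕ) :
    0 ≤ esymmRange a n h :=
  Finset.sum_nonneg fun _ hs => Finset.prod_nonneg fun j hj =>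
    (ha j (Finset.mem_range.1 ((Finset.mem_powersetCard.1 hs).1 hj))).le

lemma esymmRange_pos {a : ℕ → ℝ} {n h : ℕ} (ha : ∀ j, j < n → 0 < a j) (hn : h ≤ n) :
    0 < esymmRange a n h :=
  Finset.sum_pos
    (fun _ hs => Finset.prod_pos fun j hj =>
      ha j (Finset.mem_range.1 ((Finset.mem_powersetCard.1 hs).1 hj)))
    (Finset.powersetCard_nonempty.2 (by simpa using hn))

/-- Strong log-concavity, a weak form of Newton's inequalities. -/
lemma esymmRange_logConcave {a : ℕ → ℝ} {n : ℕ} (ha : ∀ j, j < n → 0 < a j) {i j : ℕ}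
    (hij : i ≤ j) :
    esymmRange a n i * esymmRange a n (j + 2) ≤
      esymmRange a n (i + 1) * esymmRange a n (j + 1) := by
  induction n generalizing i j with
  | zero => simp [esymmRange_of_lt]
  | succ n ih =>
    have ha' : ∀ j, j < n → 0 < a j := fun j hj => ha j (hj.trans n.lt_succ_self)
    replace ih : ∀ {i j : ℕ}, i ≤ j → _ := fun h => ih ha' h
    have han : 0 ≤ a n := (ha n n.lt_succ_self).le
    have hnn := esymmRange_nonneg ha'
    rcases i with _ | i
    · have h0 := ih hij
      simp only [esymmRange_succ_succ, esymmRange_zero_right] at h0 ⊢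
      nlinarith [mul_nonneg (mul_nonneg han (hnn 1)) (hnn j),
        mul_nonneg (mul_nonneg han han) (hnn j)]
    · obtain ⟨j, rfl⟩ : ∃ k, j = k + 1 := ⟨j - 1, by omega⟩
      have hij' : i ≤ j := by omega
      -- The inequality needed between the coefficients of the first power of `a n`.
      have hmid : esymmRange a n i * esymmRange a n (j + 3) ≤
          esymmRange a n (i + 2) * esymmRange a n (j + 1) := by
        refine (ih (i := i) (j := j + 1) (by omega)).trans ?_
        rcases hij'.eq_or_lt with rfl | hlt
        · exact (mul_comm _ _).le
        · exact ih hlt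
      have h0 := ih (i := i + 1) (j := j + 1) (by omega)
      have h1 := mul_le_mul_of_nonneg_left hmid han
      have h2 := mul_le_mul_of_nonneg_left (ih hij') (mul_nonneg han han)
      simp only [esymmRange_succ_succ]
      linarith

theorem elementary_symmetric_unimodal (n : ℕ) (a : ℕ → ℝ)
    (ha : ∀ j, j < n → 0 < a j)
    (esymm : ℕ → ℝ)
    (hesymm : ∀ h : ℕ,
      esymm h = ∑ s ∈ Finset.powersetCard h (Finset.range n), ∏ j ∈ s, a j) :
    ∃ h₀ : ℕ, h₀ ≤ n ∧
      (∀ h : ℕ, 1 ≤ h → h ≤ h₀ → esymm (h - 1) ≤ esymm h) ∧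
      (∀ h : ℕ, h₀ ≤ h → h < n → esymm (h + 1) ≤ esymm h) := by
  classical
  obtain rfl : esymm = esymmRange a n := funext hesymm
  have hn : esymmRange a n (n + 1) ≤ esymmRange a n n := by
    rw [esymmRange_of_lt a n.lt_succ_self]
    exact esymmRange_nonneg ha n
  have hex : ∃ h, esymmRange a n (h + 1) ≤ esymmRange a n h := ⟨n, hn⟩
  have hle : Nat.find hex ≤ n := Nat.find_min' hex hn
  refine ⟨Nat.find hex, hle, fun h h1 hh => ?_, fun h hh _ => ?_⟩
  · have := Nat.find_min hex (m := h - 1) (by omega)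
    rw [Nat.sub_add_cancel h1] at this
    exact (not_le.1 this).le
  · rcases hh.eq_or_lt with rfl | hlt
    · exact Nat.find_spec hex
    · obtain ⟨j, rfl⟩ : ∃ k, h = k + 1 := ⟨h - 1, by omega⟩
      refine le_of_mul_le_mul_left ?_ (esymmRange_pos ha hle)
      exact (esymmRange_logConcave ha (Nat.le_of_lt_succ hlt)).trans
        (mul_le_mul_of_nonneg_right (Nat.find_spec hex) (esymmRange_nonneg ha _))
end

section
/- For every prime p and every integer k ≥ 1, the set {n ≥ 1 : n has at least k distinct prime factors and the k-th smallest distinct prime factor of n equals p} has a natural density λ_k(p), and λ_k(p) = (1/p)·∏_{q prime, q < p}(1 − 1/q)·s_{k−1}(p), where s_j(p) := ∑_{m ≥ 1, P⁺(m) < p, ω(m) = j} 1/m. -/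
/-!
Write `Q` for the product of the primes below `p`. The `k`-th smallest prime factor of `n` is `p`
exactly when `p ∣ n` and `n` has `k - 1` prime factors below `p` (`mem_kthPrimeFactorEq_iff`).
Such an `n` is uniquely `m * p * r`, where `m` is `p`-smooth with `ω(m) = k - 1` and `r` is coprime
to `Q`, so the number of such `n ≤ N` is a sum over `m` of the number of `r ≤ N / (m p)` coprime
to `Q` (`countIn_kthPrimeFactorEq`).

For fixed `m`, that number divided by `N` tends to `φ(Q) / (m p Q) = (1/m) (1/p) ∏ (1 - 1/q)`
(`tendsto_coprimeCount_div`), and it is at most `1/m` for every `N`. The sum of `1/m` over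
`p`-smooth `m` converges, being a finite Euler product (`summable_smoothOmega`), so dominated
convergence allows the limit to be taken term by term.
-/


open Filter Topology
open scoped Classical

/-- Number of elements of `S` in `[1, N]`. -/
noncomputable def countIn (S : Set ℕ) (N : ℕ) : ℕ :=
  ((Finset.Icc 1 N).filter (fun n => n ∈ S)).card

/-- `S` has natural density `d`. -/
def HasDensity (S : Set ℕ) (d : ℝ) : Prop :=
  Tendsto (fun N : ℕ => (countIn S N : ℝ) / N) atTop (nhds d)

/-- `s_j(p) := ∑ 1/m`, the sum over positive integers `m` all of whose prime factors
are `< p` and with exactly `j` distinct prime factors. -/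
noncomputable def sFun (p j : ℕ) : ℝ :=
  ∑' m : {m : ℕ // 0 < m ∧ (∀ q ∈ m.primeFactors, q < p) ∧ m.primeFactors.card = j},
    (1 : ℝ) / (m.1 : ℝ)

/-- The set of `n ≥ 1` having at least `k` distinct prime factors, the `k`-th smallest
of which equals `p`. -/
def kthPrimeFactorEq (k p : ℕ) : Set ℕ :=
  {n : ℕ | 0 < n ∧ k ≤ n.primeFactors.card ∧
    (n.primeFactors.sort (· ≤ ·)).getD (k - 1) 0 = p}

/-! ### The `k`-th smallest element of a finite set -/

/-- An element `e i` of the increasing enumeration `e` of `s` has exactly `i` elements below it. -/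
lemma card_filter_lt_orderEmbOfFin (s : Finset ℕ) (i : Fin s.card) :
    (s.filter (· < s.orderEmbOfFin rfl i)).card = i := by
  have h : s.filter (· < s.orderEmbOfFin rfl i)
      = (Finset.Iio i).map (s.orderEmbOfFin rfl).toEmbedding := by
    ext x
    simp only [Finset.mem_filter, Finset.mem_map, Finset.mem_Iio]
    constructor
    · rintro ⟨hx, hlt⟩
      have : x ∈ Set.range (s.orderEmbOfFin rfl) := by
        rw [Finset.range_orderEmbOfFin]; exact hx
      obtain ⟨j, rfl⟩ := this
      exact ⟨j, by simpa using hlt, rfl⟩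
    · rintro ⟨j, hj, rfl⟩
      exact ⟨Finset.orderEmbOfFin_mem _ _ _, by simpa using hj⟩
  rw [h, Finset.card_map, Fin.card_Iio]

lemma sort_getD_eq_iff (s : Finset ℕ) (k p : ℕ) (hk : 1 ≤ k) :
    (k ≤ s.card ∧ (s.sort (· ≤ ·)).getD (k - 1) 0 = p) ↔
      p ∈ s ∧ (s.filter (· < p)).card = k - 1 := by
  have key : ∀ i : Fin s.card, (s.sort (· ≤ ·)).getD i 0 = s.orderEmbOfFin rfl i := by
    intro i
    have hi : (i : ℕ) < (s.sort (· ≤ ·)).length := by rw [Finset.length_sort]; exact i.2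
    rw [Finset.orderEmbOfFin_apply, List.getD_eq_getElem _ _ hi]
    rfl
  constructor
  · rintro ⟨h1, h2⟩
    have h3 := key ⟨k - 1, by omega⟩
    rw [h2] at h3
    rw [h3]
    exact ⟨Finset.orderEmbOfFin_mem _ _ _, card_filter_lt_orderEmbOfFin s _⟩
  · rintro ⟨h1, h2⟩
    have : p ∈ Set.range (s.orderEmbOfFin rfl) := by
      rw [Finset.range_orderEmbOfFin]; exact h1
    obtain ⟨i, rfl⟩ := this
    rw [card_filter_lt_orderEmbOfFin] at h2
    have := i.2
    exact ⟨by omega, by rw [← h2]; exact key i⟩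

lemma mem_kthPrimeFactorEq_iff {k p n : ℕ} (hk : 1 ≤ k) (hp : p.Prime) :
    n ∈ kthPrimeFactorEq k p ↔
      0 < n ∧ p ∣ n ∧ (n.primeFactors.filter (· < p)).card = k - 1 := by
  have h := sort_getD_eq_iff n.primeFactors k p hk
  simp only [kthPrimeFactorEq, Set.mem_ofPred_eq]
  rw [h, Nat.mem_primeFactors]
  constructor
  · rintro ⟨h0, ⟨-, h1, -⟩, h2⟩
    exact ⟨h0, h1, h2⟩
  · rintro ⟨h0, h1, h2⟩
    exact ⟨h0, ⟨hp, h1, h0.ne'⟩, h2⟩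

/-! ### Counting integers coprime to a modulus -/

/-- The number of integers in `[1, x]` coprime to `Q`. -/
noncomputable def coprimeCount (Q x : ℕ) : ℕ :=
  ((Finset.Icc 1 x).filter (fun r => Q.Coprime r)).card

lemma coprimeCount_le_self (Q x : ℕ) : coprimeCount Q x ≤ x :=
  (Finset.card_filter_le _ _).trans (by simp)

lemma coprimeCount_le {Q : ℕ} (hQ : 0 < Q) (x : ℕ) :
    coprimeCount Q x ≤ Q.totient * (x / Q + 1) := by
  have h := Nat.Ico_filter_coprime_le 1 x hQ.ne'
  have e : Finset.Icc 1 x = Finset.Ico 1 (1 + x) := by ext; simp; omega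
  unfold coprimeCount
  rw [e]
  convert h

lemma coprimeCount_mul (Q a : ℕ) : coprimeCount Q (a * Q) = a * Q.totient := by
  induction a with
  | zero => simp [coprimeCount]
  | succ a ih =>
    have h := Nat.filter_coprime_Ico_eq_totient Q (a * Q + 1)
    have e : Finset.Icc 1 ((a + 1) * Q)
        = Finset.Icc 1 (a * Q) ∪ Finset.Ico (a * Q + 1) (a * Q + 1 + Q) := by
      ext
      have : (a + 1) * Q = a * Q + Q := by ring
      simp only [Finset.mem_Icc, Finset.mem_union, Finset.mem_Ico]
      omega
    have d : Disjoint (Finset.Icc 1 (a * Q)) (Finset.Ico (a * Q + 1) (a * Q + 1 + Q)) := by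
      rw [Finset.disjoint_left]
      intro x
      simp only [Finset.mem_Icc, Finset.mem_Ico]
      omega
    unfold coprimeCount at ih ⊢
    rw [e, Finset.filter_union, Finset.card_union_of_disjoint (Finset.disjoint_filter_filter d),
      ih, add_mul, one_mul, add_right_inj]
    convert h

lemma le_coprimeCount (Q x : ℕ) : Q.totient * (x / Q) ≤ coprimeCount Q x := by
  rw [mul_comm, ← coprimeCount_mul]
  refine Finset.card_le_card (Finset.filter_subset_filter _ ?_)
  exact Finset.Icc_subset_Icc le_rfl (Nat.div_mul_le_self x Q)

lemma tendsto_natDiv_div (d : ℕ) :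
    Tendsto (fun N : ℕ => ((N / d : ℕ) : ℝ) / N) atTop (𝓝 (1 / d)) := by
  have h := (tendsto_nat_floor_mul_div_atTop (R := ℝ) (a := 1 / d) (by positivity)).comp
    tendsto_natCast_atTop_atTop
  refine h.congr fun N => ?_
  simp only [Function.comp]
  rw [one_div_mul_eq_div, Nat.floor_div_eq_div]

/-- Among the integers `d * r ≤ N`, those with `r` coprime to `Q` have density `φ(Q) / (d Q)`:
`coprimeCount Q (N / d)` lies between `φ(Q) ⌊N / (d Q)⌋` and `φ(Q) (⌊N / (d Q)⌋ + 1)`. -/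
lemma tendsto_coprimeCount_div {Q : ℕ} (hQ : 0 < Q) (d : ℕ) :
    Tendsto (fun N : ℕ => (coprimeCount Q (N / d) : ℝ) / N) atTop
      (𝓝 ((Q.totient : ℝ) * (1 / ((d * Q : ℕ) : ℝ)))) := by
  have h := (tendsto_natDiv_div (d * Q)).const_mul (Q.totient : ℝ)
  have h0 : Tendsto (fun N : ℕ => (Q.totient : ℝ) / N) atTop (𝓝 0) :=
    tendsto_const_div_atTop_nhds_zero_nat _
  have h' := h.add h0
  rw [add_zero] at h'
  refine tendsto_of_tendsto_of_tendsto_of_le_of_le h h' (fun N => ?_) (fun N => ?_)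
  · have := le_coprimeCount Q (N / d)
    rw [Nat.div_div_eq_div_mul] at this
    have : ((Q.totient * (N / (d * Q)) : ℕ) : ℝ) ≤ coprimeCount Q (N / d) := by exact_mod_cast this
    simp only [← mul_div_assoc]
    push_cast at this
    gcongr
  · have := coprimeCount_le hQ (N / d)
    rw [Nat.div_div_eq_div_mul] at this
    have : (coprimeCount Q (N / d) : ℝ) ≤ ((Q.totient * (N / (d * Q) + 1) : ℕ) : ℝ) := by
      exact_mod_cast this
    simp only [← mul_div_assoc, ← add_div]
    rw [Nat.cast_mul, Nat.cast_add, Nat.cast_one, mul_add, mul_one] at this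
    gcongr

/-! ### Splitting off the smooth part -/

/-- The product of the primes below `p`. -/
def primeProd (p : ℕ) : ℕ := ∏ q ∈ (Finset.range p).filter Nat.Prime, q

lemma primeProd_pos (p : ℕ) : 0 < primeProd p :=
  Finset.prod_pos fun _ hq => (Finset.mem_filter.1 hq).2.pos

lemma coprime_primeProd_iff {p r : ℕ} :
    (primeProd p).Coprime r ↔ ∀ q, q.Prime → q ∣ r → p ≤ q := by
  rw [primeProd, Nat.coprime_prod_left_iff]
  constructor
  · intro h q hq hqr
    by_contra! hlt
    have := h q (by simp [hlt, hq])
    exact (hq.coprime_iff_not_dvd.1 this) hqr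
  · intro h q hq
    rw [Finset.mem_filter, Finset.mem_range] at hq
    rw [hq.2.coprime_iff_not_dvd]
    intro hd
    exact absurd (h q hq.2 hd) (by omega)

lemma totient_primeProd (p : ℕ) :
    ((primeProd p).totient : ℝ)
      = primeProd p * ∏ q ∈ (Finset.range p).filter Nat.Prime, (1 - 1 / (q : ℝ)) := by
  have h := Nat.totient_eq_mul_prod_factors (primeProd p)
  rw [show (primeProd p).primeFactors = (Finset.range p).filter Nat.Prime from
    Nat.primeFactors_prod fun q hq => (Finset.mem_filter.1 hq).2] at h
  have h' : (((primeProd p).totient : ℚ) : ℝ) = ((primeProd p *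
    ∏ q ∈ (Finset.range p).filter Nat.Prime, (1 - (q : ℚ)⁻¹) : ℚ) : ℝ) := by rw [h]
  push_cast at h'
  simpa only [one_div] using h'

/-- The index set of `sFun p j`. -/
def smoothOmega (p j : ℕ) : Set ℕ :=
  {m : ℕ | 0 < m ∧ (∀ q ∈ m.primeFactors, q < p) ∧ m.primeFactors.card = j}

lemma coprime_of_smooth_rough {p m r : ℕ} (hp : p.Prime) (hm0 : 0 < m)
    (hm : ∀ q ∈ m.primeFactors, q < p) (hr : (primeProd p).Coprime r) : m.Coprime (p * r) := by
  rw [coprime_primeProd_iff] at hr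
  refine Nat.coprime_of_dvd fun q hq hqm hqr => ?_
  have h1 : q < p := hm q (Nat.mem_primeFactors.2 ⟨hq, hqm, hm0.ne'⟩)
  rcases hq.dvd_mul.1 hqr with h | h
  · exact h1.ne ((Nat.prime_dvd_prime_iff_eq hq hp).1 h)
  · exact absurd (hr q hq h) (by omega)

lemma filter_primeFactors_mul {p m r : ℕ} (hp : p.Prime) (hm0 : 0 < m)
    (hm : ∀ q ∈ m.primeFactors, q < p) (hr0 : 0 < r) (hr : (primeProd p).Coprime r) :
    (m * (p * r)).primeFactors.filter (· < p) = m.primeFactors := by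
  ext q
  rw [Finset.mem_filter, Nat.primeFactors_mul hm0.ne' (mul_pos hp.pos hr0).ne',
    Nat.primeFactors_mul hp.ne_zero hr0.ne', hp.primeFactors]
  simp only [Finset.mem_union, Finset.mem_singleton]
  constructor
  · rintro ⟨h | h | h, hlt⟩
    · exact h
    · omega
    · rw [coprime_primeProd_iff] at hr
      have := hr q (Nat.prime_of_mem_primeFactors h) (Nat.dvd_of_mem_primeFactors h)
      omega
  · intro h
    exact ⟨Or.inl h, hm q h⟩

lemma exists_smooth_rough {p n : ℕ} (hp : p.Prime) (hn : 0 < n) (hpn : p ∣ n) :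
    ∃ m r, n = m * (p * r) ∧ 0 < m ∧ (∀ q ∈ m.primeFactors, q < p) ∧ 0 < r ∧
      (primeProd p).Coprime r := by
  set l := n.primeFactorsList
  set m := (l.filter (· < p)).prod
  set t := (l.filter (fun q => ¬ q < p)).prod
  have hmt : m * t = n := by
    have h := (List.filter_append_perm (fun q => decide (q < p)) l).prod_eq
    rw [List.prod_append, Nat.prod_primeFactorsList hn.ne'] at h
    simpa only [m, t, decide_not] using h
  have hm0 : 0 < m := Nat.pos_of_mul_pos_right (hmt ▸ hn)
  have hm : ∀ q ∈ m.primeFactors, q < p := by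
    intro q hq
    exact (Nat.mem_smoothNumbers'.1 (Nat.prod_mem_smoothNumbers n p)) q
      (Nat.prime_of_mem_primeFactors hq) (Nat.dvd_of_mem_primeFactors hq)
  have ht : ∀ q, q.Prime → q ∣ t → p ≤ q := by
    intro q hq hqt
    obtain ⟨a, ha, hqa⟩ := (hq.prime.dvd_prod_iff).1 hqt
    simp only [List.mem_filter, decide_eq_true_eq] at ha
    have := (Nat.prime_dvd_prime_iff_eq hq (Nat.prime_of_mem_primeFactorsList ha.1)).1 hqa
    omega
  have hpt : p ∣ t := by
    rw [← hmt] at hpn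
    refine (hp.dvd_mul.1 hpn).resolve_left fun h => ?_
    exact lt_irrefl p (hm p (Nat.mem_primeFactors.2 ⟨hp, h, hm0.ne'⟩))
  obtain ⟨r, hr⟩ := hpt
  refine ⟨m, r, by rw [← hr, hmt], hm0, hm, ?_, ?_⟩
  · rcases Nat.eq_zero_or_pos r with h | h
    · rw [h, mul_zero] at hr
      rw [hr, mul_zero] at hmt
      omega
    · exact h
  · rw [coprime_primeProd_iff]
    intro q hq hqr
    exact ht q hq (hr ▸ hqr.mul_left p)

/-- Every `n` counted on the left is uniquely `m * p * r` with `m` the `p`-smooth part of `n` and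
`r` free of primes below `p`; the right side sorts the `n ≤ N` by `m`. -/
lemma countIn_kthPrimeFactorEq {p k : ℕ} (hp : p.Prime) (hk : 1 ≤ k) (N : ℕ) :
    countIn (kthPrimeFactorEq k p) N
      = ∑ m ∈ (Finset.Icc 1 N).filter (· ∈ smoothOmega p (k - 1)),
          coprimeCount (primeProd p) (N / (m * p)) := by
  unfold countIn coprimeCount
  rw [← Finset.card_sigma]
  symm
  refine Finset.card_bij (fun x _ => x.1 * (p * x.2)) ?_ ?_ ?_
  · rintro ⟨m, r⟩ h
    simp only [Finset.mem_sigma, Finset.mem_filter, Finset.mem_Icc] at h ⊢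
    obtain ⟨⟨-, hm0, hm, hc⟩, ⟨hr0, hrN⟩, hr⟩ := h
    rw [Nat.le_div_iff_mul_le (mul_pos hm0 hp.pos)] at hrN
    have hpos : 0 < m * (p * r) := mul_pos hm0 (mul_pos hp.pos hr0)
    refine ⟨⟨hpos, by linarith [mul_comm r (m * p), mul_assoc m p r]⟩, ?_⟩
    rw [mem_kthPrimeFactorEq_iff hk hp, filter_primeFactors_mul hp hm0 hm hr0 hr]
    exact ⟨hpos, (dvd_mul_right p r).mul_left m, hc⟩
  · rintro ⟨m, r⟩ h ⟨m', r'⟩ h' heq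
    simp only [Finset.mem_sigma, Finset.mem_filter, Finset.mem_Icc] at h h' heq
    obtain ⟨⟨-, hm0, hm, -⟩, -, hr⟩ := h
    obtain ⟨⟨-, hm0', hm', -⟩, -, hr'⟩ := h'
    have h1 : m ∣ m' := (coprime_of_smooth_rough hp hm0 hm hr').dvd_of_dvd_mul_right
      (heq ▸ dvd_mul_right m (p * r))
    have h2 : m' ∣ m := (coprime_of_smooth_rough hp hm0' hm' hr).dvd_of_dvd_mul_right
      (heq ▸ dvd_mul_right m' (p * r'))
    obtain rfl := Nat.dvd_antisymm h1 h2
    obtain rfl := Nat.eq_of_mul_eq_mul_left hp.pos (Nat.eq_of_mul_eq_mul_left hm0 heq)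
    rfl
  · intro n hn
    simp only [Finset.mem_filter, Finset.mem_Icc] at hn
    obtain ⟨⟨-, hnN⟩, hS⟩ := hn
    rw [mem_kthPrimeFactorEq_iff hk hp] at hS
    obtain ⟨hn0, hpn, hc⟩ := hS
    obtain ⟨m, r, rfl, hm0, hm, hr0, hr⟩ := exists_smooth_rough hp hn0 hpn
    rw [filter_primeFactors_mul hp hm0 hm hr0 hr] at hc
    refine ⟨⟨m, r⟩, ?_, rfl⟩
    simp only [Finset.mem_sigma, Finset.mem_filter, Finset.mem_Icc]
    refine ⟨⟨⟨hm0, ?_⟩, hm0, hm, hc⟩, ⟨hr0, ?_⟩, hr⟩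
    · exact (Nat.le_mul_of_pos_right m (mul_pos hp.pos hr0)).trans hnN
    · rw [Nat.le_div_iff_mul_le (mul_pos hm0 hp.pos)]
      linarith [mul_comm r (m * p), mul_assoc m p r]

/-! ### Summation over the smooth part -/

lemma summable_smoothOmega (p j : ℕ) :
    Summable ((smoothOmega p j).indicator fun m : ℕ => 1 / (m : ℝ)) := by
  have h := (EulerProduct.summable_and_hasSum_smoothNumbers_prod_primesBelow_tsum
    (f := fun m : ℕ => 1 / (m : ℝ)) (by simp) (fun {a b} _ => by simp [mul_comm])
    (fun {q} hq => by
      have hq1 : (1 : ℝ) < q := by exact_mod_cast hq.one_lt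
      have := summable_geometric_of_lt_one (r := 1 / (q : ℝ)) (by positivity)
        (by rw [div_lt_one (by linarith)]; exact hq1)
      refine this.congr fun n => ?_
      simp) p).2.summable
  have h' : Summable ((Nat.smoothNumbers p).indicator fun m : ℕ => 1 / (m : ℝ)) :=
    summable_subtype_iff_indicator.1 h
  refine h'.of_nonneg_of_le (fun m => Set.indicator_nonneg (fun _ _ => by positivity) _) fun m => ?_
  refine Set.indicator_le_indicator_of_subset ?_ (fun _ => by positivity) m
  rintro m ⟨hm0, hm, -⟩
  exact ⟨hm0.ne', fun q hq => hm q (Nat.mem_primeFactors_iff_mem_primeFactorsList.2 hq)⟩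

theorem density_of_kth_prime_factor (p : ℕ) (hp : p.Prime) (k : ℕ) (hk : 1 ≤ k) :
    HasDensity (kthPrimeFactorEq k p)
      ((1 / (p : ℝ)) * (∏ q ∈ (Finset.range p).filter Nat.Prime, (1 - 1 / (q : ℝ))) *
        sFun p (k - 1)) := by
  set T := smoothOmega p (k - 1) with hT
  set Q := primeProd p with hQ
  set C := ∏ q ∈ (Finset.range p).filter Nat.Prime, (1 - 1 / (q : ℝ)) with hC
  have hp0 : (0 : ℝ) < p := by exact_mod_cast hp.pos
  have hQ0 : (0 : ℝ) < Q := by exact_mod_cast primeProd_pos p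
  have hcount : ∀ N : ℕ, (countIn (kthPrimeFactorEq k p) N : ℝ) / N
      = ∑' m : ℕ, T.indicator (fun m => (coprimeCount Q (N / (m * p)) : ℝ) / N) m := by
    intro N
    rw [tsum_eq_sum (s := Finset.Icc 1 N), countIn_kthPrimeFactorEq hp hk, Nat.cast_sum,
      Finset.sum_div, Finset.sum_filter]
    · refine Finset.sum_congr rfl fun m _ => ?_
      simp only [Set.indicator_apply]
      rfl
    · intro m hm
      refine Set.indicator_apply_eq_zero.2 fun hmT => ?_
      have hmN : N < m * p := by
        have h0 : 0 < m := hmT.1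
        have : N < m := by
          by_contra! h
          exact hm (Finset.mem_Icc.2 ⟨h0, h⟩)
        exact this.trans_le (Nat.le_mul_of_pos_right m hp.pos)
      simp [Nat.div_eq_of_lt hmN, coprimeCount]
  have hlim : (1 / (p : ℝ)) * C * sFun p (k - 1)
      = ∑' m : ℕ, T.indicator (fun m : ℕ => (Q.totient : ℝ) * (1 / ((m * p * Q : ℕ) : ℝ))) m := by
    have hs : sFun p (k - 1) = ∑' m : ℕ, T.indicator (fun m : ℕ => 1 / (m : ℝ)) m :=
      tsum_subtype T fun m : ℕ => 1 / (m : ℝ)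
    rw [hs, ← tsum_mul_left]
    refine tsum_congr fun m => ?_
    simp only [Set.indicator_apply]
    split_ifs with hm
    · have hm0 : (0 : ℝ) < m := by exact_mod_cast hm.1
      rw [hQ, totient_primeProd, ← hQ, ← hC]
      push_cast
      field_simp
    · simp
  unfold HasDensity
  rw [hlim]
  simp_rw [hcount]
  refine tendsto_tsum_of_dominated_convergence (summable_smoothOmega p (k - 1)) ?_ ?_
  · intro m
    by_cases hm : m ∈ T
    · simp only [Set.indicator_of_mem hm]
      exact tendsto_coprimeCount_div (primeProd_pos p) (m * p)
    · simp only [Set.indicator_of_notMem hm]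
      exact tendsto_const_nhds
  · refine Eventually.of_forall fun N m => ?_
    by_cases hm : m ∈ T
    · have hm0 : (0 : ℝ) < m := by exact_mod_cast hm.1
      have h1 : coprimeCount Q (N / (m * p)) ≤ N / m :=
        (coprimeCount_le_self _ _).trans
          (Nat.div_le_div_left (Nat.le_mul_of_pos_right m hp.pos) hm.1)
      have h2 : (coprimeCount Q (N / (m * p)) : ℝ) ≤ (N : ℝ) / m :=
        (Nat.cast_le.2 h1).trans Nat.cast_div_le
      rw [Set.indicator_of_mem hm, Set.indicator_of_mem (show m ∈ smoothOmega p (k - 1) from hm),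
        Real.norm_of_nonneg (by positivity)]
      refine div_le_of_le_mul₀ (by positivity) (by positivity) (h2.trans_eq ?_)
      ring
    · rw [Set.indicator_of_notMem hm,
        Set.indicator_of_notMem (show m ∉ smoothOmega p (k - 1) from hm), norm_zero]
end

section
/- For every prime p, the sequence k ↦ λ_k(p) (k ≥ 1) is unimodal: there exists k₀ ≥ 1 such that λ_k(p) ≤ λ_{k+1}(p) for all k < k₀ and λ_k(p) ≥ λ_{k+1}(p) for all k ≥ k₀. Here λ_k(p) is the natural density of the set of integers n whose k-th smallest distinct prime factor equals p (this density exists). -/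
/-! The `k`-th smallest prime factor of `n` is `p` exactly when `p ∣ n` and exactly `k - 1` primes
below `p` divide `n / p`. So `λ_k(p) = a (k - 1) / p`, where `a j` is the density of the integers
divisible by exactly `j` members of the set `P` of primes below `p`.

Adjoining a prime `q` to `P` turns `a` into `(1 - 1/q) a j + (1/q) a (j - 1)`: by
`HasDensity.dilate`, restricting to the multiples of `q` divides densities by `q`, and divisibility
by the other primes is the same for `q m` and `m`. Hence `a` is the law of a sum of independent
Bernoulli variables. Multiplication of the generating polynomial by a linear factor with
nonnegative coefficients preserves log-concavity (`LogConcaveSeq.step`), and a finitely supported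
nonnegative log-concave sequence with `0 < a 0` is unimodal (`LogConcaveSeq.unimodal`). -/

open Filter Topology
open scoped Classical

/-! ### Log-concave sequences -/

/-- Log-concavity in its "decreasing ratios" form, `a (i+1) / a i ≥ a (j+1) / a j` for `i ≤ j`, with
denominators cleared. Unlike `a i * a (i+2) ≤ a (i+1) ^ 2`, it needs no extra
hypothesis excluding internal zeros. -/
def LogConcaveSeq (a : ℕ → ℝ) : Prop :=
  ∀ i j, i ≤ j → a i * a (j + 1) ≤ a (i + 1) * a j

/-- The coefficients of `(α + β x) * ∑ a k x ^ k`. -/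
def mulLinear (α β : ℝ) (a : ℕ → ℝ) : ℕ → ℝ
  | 0 => α * a 0
  | k + 1 => α * a (k + 1) + β * a k

lemma LogConcaveSeq.step {a : ℕ → ℝ} (h : LogConcaveSeq a) (h0 : ∀ k, 0 ≤ a k) {α β : ℝ}
    (hα : 0 ≤ α) (hβ : 0 ≤ β) : LogConcaveSeq (mulLinear α β a) := by
  intro i j hij
  rcases hij.eq_or_lt with rfl | hlt
  · exact (mul_comm _ _).le
  obtain ⟨j, rfl⟩ : ∃ j', j = j' + 1 := ⟨j - 1, by omega⟩
  have hαβ := mul_nonneg hα hβ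
  have hαα := mul_nonneg hα hα
  have hββ := mul_nonneg hβ hβ
  cases i with
  | zero =>
    simp only [mulLinear]
    have e1 := mul_le_mul_of_nonneg_left (h 0 (j + 1) (by omega)) hαα
    have e2 := mul_le_mul_of_nonneg_left (h 0 j (by omega)) hαβ
    have e3 := mul_nonneg hαβ (mul_nonneg (h0 0) (h0 (j + 1)))
    have e4 := mul_nonneg hββ (mul_nonneg (h0 0) (h0 j))
    simp only [zero_add] at *
    nlinarith
  | succ i =>
    simp only [mulLinear]
    have e1 := mul_le_mul_of_nonneg_left (h (i + 1) (j + 1) (by omega)) hαα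
    have e2 := mul_le_mul_of_nonneg_left (h i j (by omega)) hββ
    have e3 := mul_le_mul_of_nonneg_left (h (i + 1) j (by omega)) hαβ
    have e4 := mul_le_mul_of_nonneg_left (h i (j + 1) (by omega)) hαβ
    nlinarith

lemma LogConcaveSeq.unimodal {a : ℕ → ℝ} (h : LogConcaveSeq a) (h0 : ∀ k, 0 ≤ a k)
    (hpos : 0 < a 0) (hz : ∃ n, a (n + 1) = 0) :
    ∃ m, (∀ k < m, a k ≤ a (k + 1)) ∧ ∀ k, m ≤ k → a (k + 1) ≤ a k := by
  have hex : ∃ n, a (n + 1) ≤ a n := by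
    obtain ⟨n, hn⟩ := hz
    exact ⟨n, hn ▸ h0 n⟩
  -- The mode is the first index after which the sequence does not strictly increase.
  have hmin : ∀ k < Nat.find hex, a k < a (k + 1) := fun k hk => not_le.1 (Nat.find_min hex hk)
  have hspec := Nat.find_spec hex
  generalize Nat.find hex = m at hmin hspec
  have hm : 0 < a m := by
    cases m with
    | zero => exact hpos
    | succ m => exact (h0 m).trans_lt (hmin m (by omega))
  refine ⟨m, fun k hk => (hmin k hk).le, fun k hk => ?_⟩
  exact le_of_mul_le_mul_left ((h m k hk).trans (mul_le_mul_of_nonneg_right hspec (h0 k))) hm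

/-! ### Densities and dilation -/

/-- The set `q · T`. -/
def dilate (q : ℕ) (T : Set ℕ) : Set ℕ := {n | q ∣ n ∧ n / q ∈ T}

lemma countIn_dilate {q : ℕ} (hq : 0 < q) (T : Set ℕ) (N : ℕ) :
    countIn (dilate q T) N = countIn T (N / q) := by
  unfold countIn
  symm
  refine Finset.card_bij (fun m _ => q * m) ?_ ?_ ?_
  · intro m hm
    rw [Finset.mem_filter, Finset.mem_Icc] at hm ⊢
    refine ⟨⟨Nat.mul_pos hq hm.1.1, ?_⟩, dvd_mul_right _ _, ?_⟩
    · rw [mul_comm]; exact (Nat.le_div_iff_mul_le hq).1 hm.1.2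
    · rw [Nat.mul_div_cancel_left _ hq]; exact hm.2
  · intro a _ b _ hab
    exact Nat.eq_of_mul_eq_mul_left hq hab
  · intro n hn
    rw [Finset.mem_filter, Finset.mem_Icc] at hn
    obtain ⟨⟨h1, h2⟩, ⟨m, rfl⟩, h4⟩ := hn
    rw [Nat.mul_div_cancel_left _ hq] at h4
    refine ⟨m, ?_, rfl⟩
    simp only [Finset.mem_filter, Finset.mem_Icc]
    refine ⟨⟨Nat.pos_of_mul_pos_left h1, ?_⟩, h4⟩
    rw [Nat.le_div_iff_mul_le hq, mul_comm]; exact h2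

lemma HasDensity.dilate {q : ℕ} (hq : 0 < q) {T : Set ℕ} {d : ℝ} (h : HasDensity T d) :
    HasDensity (dilate q T) (d / q) := by
  unfold HasDensity at *
  have h1 : Tendsto (fun N : ℕ => N / q) atTop atTop :=
    Nat.tendsto_div_const_atTop hq.ne'
  have h2 := h.comp h1
  have h3 : Tendsto (fun N : ℕ => ((N / q : ℕ) : ℝ) / N) atTop (𝓝 (1 / q)) := by
    have := (tendsto_nat_floor_mul_div_atTop (R := ℝ) (a := 1 / q) (by positivity)).comp
      tendsto_natCast_atTop_atTop
    refine this.congr fun N => ?_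
    simp only [Function.comp]
    rw [one_div_mul_eq_div, Nat.floor_div_natCast, Nat.floor_natCast]
  have h4 := h2.mul h3
  rw [mul_one_div] at h4
  refine h4.congr' ?_
  filter_upwards [eventually_ge_atTop q] with N hN
  have : ((N / q : ℕ) : ℝ) ≠ 0 := by
    exact_mod_cast (Nat.div_pos hN hq).ne'
  simp only [Function.comp]
  rw [countIn_dilate hq, div_mul_div_cancel₀ this]

lemma HasDensity.congr {S T : Set ℕ} {d : ℝ} (h : HasDensity S d)
    (hST : ∀ n, 0 < n → (n ∈ S ↔ n ∈ T)) : HasDensity T d := by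
  unfold HasDensity at *
  refine h.congr fun N => ?_
  unfold countIn
  congr 3
  exact Finset.filter_congr fun n hn => hST n (Finset.mem_Icc.1 hn).1

lemma HasDensity.union {S T : Set ℕ} {d e : ℝ} (hS : HasDensity S d) (hT : HasDensity T e)
    (hd : Disjoint S T) : HasDensity (S ∪ T) (d + e) := by
  unfold HasDensity at *
  refine (hS.add hT).congr fun N => ?_
  rw [← add_div, ← Nat.cast_add]
  unfold countIn
  rw [← Finset.card_union_of_disjoint]
  · congr 3
    ext n
    simp only [Finset.mem_union, Finset.mem_filter, Set.mem_union]
    tauto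
  · rw [Finset.disjoint_filter]
    exact fun n _ h1 h2 => Set.disjoint_left.1 hd h1 h2

lemma HasDensity.diff {S T : Set ℕ} {d e : ℝ} (hS : HasDensity S d) (hT : HasDensity T e)
    (hd : T ⊆ S) : HasDensity (S \ T) (d - e) := by
  unfold HasDensity at *
  refine (hS.sub hT).congr fun N => ?_
  rw [← sub_div]
  congr 1
  rw [sub_eq_iff_eq_add]
  norm_cast
  unfold countIn
  rw [← Finset.card_union_of_disjoint]
  · congr 1
    ext n
    have := @hd n
    simp only [Finset.mem_union, Finset.mem_filter, Set.mem_sdiff]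
    tauto
  · rw [Finset.disjoint_left]
    intro n h1 h2
    simp only [Finset.mem_filter, Set.mem_sdiff] at h1 h2
    exact h1.2.2 h2.2

lemma hasDensity_univ : HasDensity Set.univ 1 := by
  unfold HasDensity
  refine tendsto_const_nhds.congr' ?_
  filter_upwards [eventually_gt_atTop 0] with N hN
  have : (N : ℝ) ≠ 0 := by exact_mod_cast hN.ne'
  simp [countIn, this]

lemma hasDensity_empty : HasDensity ∅ 0 := by
  unfold HasDensity
  simp [countIn]

/-! ### Integers divisible by a given number of primes of a finite set -/

/-- The integers divisible by exactly `k` elements of `P`. -/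
def exactly (P : Finset ℕ) (k : ℕ) : Set ℕ := {n | (P.filter (· ∣ n)).card = k}

lemma exactly_mul {P : Finset ℕ} (hP : ∀ r ∈ P, r.Prime) {q : ℕ} (hq : q.Prime) (hqP : q ∉ P)
    (k m : ℕ) : q * m ∈ exactly P k ↔ m ∈ exactly P k := by
  simp only [exactly, Set.mem_ofPred_eq]
  rw [Finset.filter_congr (q := (· ∣ m))]
  intro r hr
  have : Nat.Coprime r q := (Nat.coprime_primes (hP r hr) hq).2 fun h => hqP (h ▸ hr)
  exact this.dvd_mul_left

lemma dilate_exactly {P : Finset ℕ} (hP : ∀ r ∈ P, r.Prime) {q : ℕ} (hq : q.Prime) (hqP : q ∉ P)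
    (k : ℕ) : dilate q (exactly P k) = {n | q ∣ n ∧ n ∈ exactly P k} := by
  ext n
  simp only [dilate, Set.mem_ofPred_eq]
  refine and_congr_right ?_
  rintro ⟨m, rfl⟩
  rw [Nat.mul_div_cancel_left _ hq.pos, exactly_mul hP hq hqP]

/-- Adjoining a prime `q` multiplies the generating polynomial of the densities by
`(1 - 1/q) + x/q`. -/
lemma hasDensity_exactly_insert {P : Finset ℕ} (hP : ∀ r ∈ P, r.Prime) {q : ℕ} (hq : q.Prime)
    (hqP : q ∉ P) {a : ℕ → ℝ} (ha : ∀ k, HasDensity (exactly P k) (a k)) (k : ℕ) :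
    HasDensity (exactly (insert q P) k) (mulLinear (1 - 1 / q) (1 / q) a k) := by
  have hdiff : ∀ k, HasDensity (exactly P k \ dilate q (exactly P k)) ((1 - 1 / q) * a k) := by
    intro k
    have := (ha k).diff ((ha k).dilate hq.pos) (by
      rw [dilate_exactly hP hq hqP]; exact fun n hn => hn.2)
    convert this using 1
    ring
  have hins : ∀ n, ((insert q P).filter (· ∣ n)).card
      = (P.filter (· ∣ n)).card + if q ∣ n then 1 else 0 := by
    intro n
    rw [Finset.filter_insert]
    split_ifs with h
    · rw [Finset.card_insert_of_notMem (by simp [hqP])]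
    · rfl
  cases k with
  | zero =>
    refine (hdiff 0).congr fun n _ => ?_
    rw [dilate_exactly hP hq hqP]
    simp only [exactly, Set.mem_sdiff, Set.mem_ofPred_eq, hins]
    split_ifs with h <;> simp [h]
  | succ k =>
    have := (hdiff (k + 1)).union ((ha k).dilate hq.pos) (by
      rw [Set.disjoint_left]
      rintro n ⟨h1, h2⟩ h3
      exact h2 (by rw [dilate_exactly hP hq hqP]; exact ⟨h3.1, h1⟩))
    rw [← one_div_mul_eq_div (q : ℝ) (a k)] at this
    refine this.congr fun n _ => ?_
    rw [dilate_exactly hP hq hqP, dilate_exactly hP hq hqP]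
    simp only [exactly, Set.mem_union, Set.mem_sdiff, Set.mem_ofPred_eq, hins]
    split_ifs with h <;> simp [h]

lemma exists_densities (P : Finset ℕ) (hP : ∀ r ∈ P, r.Prime) :
    ∃ a : ℕ → ℝ, (∀ k, HasDensity (exactly P k) (a k)) ∧ (∀ k, 0 ≤ a k) ∧ 0 < a 0 ∧
      LogConcaveSeq a ∧ ∃ n, ∀ k, n < k → a k = 0 := by
  induction P using Finset.induction_on with
  | empty =>
    refine ⟨fun k => if k = 0 then 1 else 0, fun k => ?_, fun k => ?_, by simp,
      fun i j _ => ?_, 0, fun k hk => if_neg hk.ne'⟩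
    · dsimp only
      split_ifs with h
      · exact hasDensity_univ.congr fun n _ => by simp [exactly, h]
      · exact hasDensity_empty.congr fun n _ => by simp [exactly, Ne.symm h]
    · dsimp only
      split_ifs <;> norm_num
    · simp
  | insert q P hqP ih =>
    have hP' : ∀ r ∈ P, r.Prime := fun r hr => hP r (Finset.mem_insert_of_mem hr)
    have hq : q.Prime := hP q (Finset.mem_insert_self _ _)
    obtain ⟨a, ha, h0, hpos, hlc, n, hn⟩ := ih hP'
    have hβ : (0 : ℝ) ≤ 1 / q := by positivity
    have hα : (0 : ℝ) < 1 - 1 / q := by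
      have : (1 : ℝ) < q := by exact_mod_cast hq.one_lt
      rw [sub_pos, div_lt_one (by linarith)]
      exact this
    refine ⟨mulLinear (1 - 1 / q) (1 / q) a, hasDensity_exactly_insert hP' hq hqP ha,
      fun k => ?_, mul_pos hα hpos, hlc.step h0 hα.le hβ, n + 1, fun k hk => ?_⟩
    · cases k with
      | zero => exact mul_nonneg hα.le (h0 0)
      | succ k => exact add_nonneg (mul_nonneg hα.le (h0 _)) (mul_nonneg hβ (h0 _))
    · obtain ⟨k, rfl⟩ : ∃ k', k = k' + 1 := ⟨k - 1, by omega⟩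
      simp [mulLinear, hn (k + 1) (by omega), hn k (by omega)]

/-! ### The `k`-th smallest prime factor -/

/-- In a strictly increasing list, the entry at position `i` is the one with exactly `i` entries
below it. -/
lemma getD_eq_iff_countP (l : List ℕ) (hl : l.Pairwise (· < ·)) (p i : ℕ) :
    (i < l.length ∧ l.getD i 0 = p) ↔ (p ∈ l ∧ l.countP (· < p) = i) := by
  induction l generalizing i with
  | nil => simp
  | cons b t ih =>
    rw [List.pairwise_cons] at hl
    obtain ⟨hb, ht⟩ := hl
    have hzero : ∀ c, c ≤ b → t.countP (· < c) = 0 := by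
      intro c hc
      rw [List.countP_eq_zero]
      intro x hx
      have := hb x hx
      simp only [decide_eq_true_eq]
      omega
    cases i with
    | zero =>
      simp only [List.length_cons, List.getD_cons_zero, List.mem_cons, List.countP_cons]
      constructor
      · rintro ⟨-, rfl⟩
        simp [hzero b le_rfl]
      · rintro ⟨rfl | h, h2⟩
        · simp
        · simp [hb p h] at h2
    | succ i =>
      simp only [List.length_cons, List.getD_cons_succ, List.mem_cons, List.countP_cons,
        Nat.add_lt_add_iff_right]
      rw [ih ht]
      constructor
      · rintro ⟨h1, h2⟩
        simp [h1, h2, hb p h1]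
      · rintro ⟨rfl | h, h2⟩
        · simp [hzero p le_rfl] at h2
        · simp only [hb p h, decide_true, if_true] at h2
          exact ⟨h, by omega⟩

lemma mem_kthPrimeFactorEq {p : ℕ} (hp : p.Prime) {k : ℕ} (hk : 1 ≤ k) {n : ℕ} (hn : 0 < n) :
    n ∈ kthPrimeFactorEq k p ↔
      n ∈ dilate p (exactly ((Finset.range p).filter Nat.Prime) (k - 1)) := by
  rw [dilate_exactly (by simp) hp (by simp)]
  have key := getD_eq_iff_countP (n.primeFactors.sort (· ≤ ·))
    (Finset.sortedLT_sort n.primeFactors).pairwise p (k - 1)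
  have hcount : (n.primeFactors.sort (· ≤ ·)).countP (· < p)
      = (((Finset.range p).filter Nat.Prime).filter (· ∣ n)).card := by
    have h1 : (((Finset.range p).filter Nat.Prime).filter (· ∣ n))
        = n.primeFactors.filter (· < p) := by
      ext r
      simp only [Finset.mem_filter, Finset.mem_range, Nat.mem_primeFactors]
      have := hn.ne'
      tauto
    rw [h1, ← Multiset.coe_countP, Finset.sort_eq, Multiset.countP_eq_card_filter]
    simp only [Finset.card, Finset.filter_val]
  rw [hcount, Finset.length_sort, Finset.mem_sort, Nat.mem_primeFactors] at key
  have hlt : k - 1 < n.primeFactors.card ↔ k ≤ n.primeFactors.card := by omega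
  rw [hlt] at key
  simp only [kthPrimeFactorEq, exactly, Set.mem_ofPred_eq]
  rw [key]
  have := hn.ne'
  tauto

theorem lambda_k_unimodal_in_k (p : ℕ) (hp : p.Prime) :
    ∃ lam : ℕ → ℝ,
      (∀ k : ℕ, 1 ≤ k → HasDensity (kthPrimeFactorEq k p) (lam k)) ∧
      ∃ k₀ : ℕ, 1 ≤ k₀ ∧
        (∀ k : ℕ, 1 ≤ k → k < k₀ → lam k ≤ lam (k + 1)) ∧
        (∀ k : ℕ, k₀ ≤ k → lam (k + 1) ≤ lam k) := by
  obtain ⟨a, ha, h0, hpos, hlc, n, hn⟩ :=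
    exists_densities ((Finset.range p).filter Nat.Prime) (by simp)
  obtain ⟨m, hup, hdown⟩ := hlc.unimodal h0 hpos ⟨n, hn _ (by omega)⟩
  have hp0 : (0 : ℝ) ≤ p := Nat.cast_nonneg p
  refine ⟨fun k => a (k - 1) / p, fun k hk => ?_, m + 1, by omega, fun k hk hkm => ?_,
    fun k hk => ?_⟩
  · exact ((ha (k - 1)).dilate hp.pos).congr fun n hn => (mem_kthPrimeFactorEq hp hk hn).symm
  · have := hup (k - 1) (by omega)
    rw [Nat.sub_add_cancel hk] at this
    simpa using div_le_div_of_nonneg_right this hp0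
  · have := hdown (k - 1) (by omega)
    rw [Nat.sub_add_cancel (by omega)] at this
    simpa using div_le_div_of_nonneg_right this hp0
end

section
/- For n ≥ 2 let M_n(x) := #{m ≤ x : some integer a with n ≤ a ≤ 2n divides m}, let ε_n be the natural density of the set of multiples M([n,2n] ∩ ℕ) (this density exists), and put R_n(x) := M_n(x) − ε_n·x. Then for every ε > 0 there exists n₀ such that for all n ≥ n₀: sup_{x ≥ 1} |R_n(x)| ≥ 2^{(1−ε)·n/(2·log n)}. -/
/-!
The remainder `R(k) = M_n(k) - ε_n k` is periodic in the integer `k`, with period a number `L` divisible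
by every `a ∈ [n, 2n]`, and it is bounded below in mean square through its Fourier coefficients at the
frequencies `1/d`, where `d > 1` runs over the `2 ^ |Q| - 1` products of primes from the set `Q` of
primes in `(√(2n), 2n]`.

By summation by parts (`remainder_fourier`) the coefficient of `R` at `1/d` is, up to the factor
`1 / (ζ_d - 1)` of size at least `d / 2π`, that of the indicator `g` of the integers with no divisor in
`[n, 2n]`. An element of `[n, 2n]` has at most one prime factor in `Q`, so `g` factors as a function of
period prime to `d` times `∏_{p ∣ d} (1 - 1_{p ∣ x} w_p(x))`, where `w_p(x) = 1` if `x` has a divisor `k`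
with `k p ∈ [n, 2n]` (`hit_iff`). Only the top term of the expanded product correlates with `ζ_d ^ x`
(`fourier_eval`), and the coefficient is, up to sign, the proportion of multiples `x` of `d` that have no
divisor in `[n, 2n]` coprime to `d` but satisfy `w_p(x) = 1` for all `p ∣ d`. Taking
`x = d * 2 ^ J * z` with `2 ^ J` the largest power of two below `n` and `z` without prime factors up to
`2n` dividing the rest of the period, this proportion is at least `1 / (2 n² d)` (`fourier_lower`). Each
coefficient of `R` is therefore `≫ n⁻²`, and Bessel's inequality gives `sup |R|² ≫ 2 ^ |Q| / n⁴`
(`remainder_bound`).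

All primes in `(√(2n), 2n]` are available, not only those in `(n, 2n]`, so the prime number theorem is not
needed: Chebyshev's bound gives `|Q| ≥ c n / log n` with some `c > 1` (`card_Qs_large`).
-/

open Filter Topology
open scoped Classical

/-- The set of multiples of `A`. -/
def setOfMultiples (A : Set ℕ) : Set ℕ :=
  {n : ℕ | ∃ a ∈ A, ∃ m : ℕ, 1 ≤ m ∧ n = m * a}

/-- `M_n(x)`: the number of `m ≤ x` divisible by some integer `a ∈ [n, 2n]`. -/
noncomputable def Mcount (n : ℕ) (x : ℝ) : ℕ :=
  ((Finset.Icc 1 ⌊x⌋₊).filter (fun m => ∃ a : ℕ, n ≤ a ∧ a ≤ 2 * n ∧ a ∣ m)).card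

/-! ### Characters and Bessel's inequality -/

theorem sum_range_shift {L : ℕ} {F : ℕ → ℂ} (hF : ∀ x, F (x + L) = F x) (s : ℕ) :
    ∑ x ∈ Finset.range L, F (x + s) = ∑ x ∈ Finset.range L, F x := by
  induction s with
  | zero => simp
  | succ s ih =>
    rw [← ih]
    have h1 := Finset.sum_range_succ (fun x => F (x + s)) L
    have h2 := Finset.sum_range_succ' (fun x => F (x + s)) L
    have h3 : F (L + s) = F (0 + s) := by rw [add_comm L s, hF, zero_add]
    rw [h1, h3] at h2
    have h4 := add_right_cancel h2
    rw [h4]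
    refine Finset.sum_congr rfl fun x _ => ?_
    congr 1; ring

theorem sum_eq_zero_of_shift {L s : ℕ} {F : ℕ → ℂ} {c : ℂ} (hF : ∀ x, F (x + L) = F x)
    (hc : c ≠ 1) (hs : ∀ x, F (x + s) = c * F x) : ∑ x ∈ Finset.range L, F x = 0 := by
  have h := sum_range_shift hF s
  simp only [hs, ← Finset.mul_sum] at h
  have h' : (c - 1) * ∑ x ∈ Finset.range L, F x = 0 := by rw [sub_mul, h]; ring
  exact (mul_eq_zero.mp h').resolve_left (sub_ne_zero.mpr hc)

/-- The primitive `d`-th root of unity `exp(2πi/d)`; equal to `1` for `d = 0`. -/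
noncomputable def zt (d : ℕ) : ℂ := Complex.exp (2 * Real.pi * Complex.I / d)

theorem zt_prim {d : ℕ} (hd : d ≠ 0) : IsPrimitiveRoot (zt d) d :=
  Complex.isPrimitiveRoot_exp d hd

theorem zt_norm (d : ℕ) : ‖zt d‖ = 1 := by
  have : (2 * Real.pi * Complex.I / d : ℂ) = ((2 * Real.pi / d : ℝ) : ℂ) * Complex.I := by
    push_cast; ring
  rw [zt, this, Complex.norm_exp_ofReal_mul_I]

theorem zt_sub_one (d : ℕ) : ‖zt d - 1‖ ≤ 2 * Real.pi / d := by
  have : (2 * Real.pi * Complex.I / d : ℂ) = Complex.I * ((2 * Real.pi / d : ℝ) : ℂ) := by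
    push_cast; ring
  rw [zt, this]
  refine (Real.norm_exp_I_mul_ofReal_sub_one_le).trans ?_
  rw [Real.norm_of_nonneg (by positivity)]

theorem zt_pow_period {d L : ℕ} (hd : d ≠ 0) (h : d ∣ L) (x : ℕ) :
    zt d ^ (x + L) = zt d ^ x := by
  rw [pow_add, ((zt_prim hd).pow_eq_one_iff_dvd L).mpr h, mul_one]

theorem zt_orth {L d d' : ℕ} (hd : d ≠ 0) (hd' : d' ≠ 0) (h : d ∣ L) (h' : d' ∣ L) (hne : d ≠ d') :
    ∑ x ∈ Finset.range L, zt d' ^ x * (starRingEnd ℂ) (zt d ^ x) = 0 := by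
  refine sum_eq_zero_of_shift (s := 1) (c := zt d' * (starRingEnd ℂ) (zt d)) ?_ ?_ ?_
  · intro x; rw [zt_pow_period hd h, zt_pow_period hd' h']
  · intro hc
    have h1 : zt d * (starRingEnd ℂ) (zt d) = 1 := by
      rw [Complex.mul_conj, Complex.normSq_eq_norm_sq, zt_norm]; simp
    have h2 : zt d' = zt d := by
      calc zt d' = zt d' * (zt d * (starRingEnd ℂ) (zt d)) := by rw [h1, mul_one]
        _ = zt d * (zt d' * (starRingEnd ℂ) (zt d)) := by ring
        _ = zt d := by rw [hc, mul_one]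
    have h3 := zt_prim hd'
    rw [h2] at h3
    exact hne ((zt_prim hd).unique h3)
  · intro x; simp only [pow_succ, map_mul]; ring

/-- Bessel's inequality for the orthogonal characters `x ↦ ζ_d ^ x`, `d ∈ D`, on a period `L`. -/
theorem zt_bessel {L : ℕ} (hL : 0 < L) (D : Finset ℕ) (hD : ∀ d ∈ D, d ∣ L) (S : ℕ → ℝ) :
    ∑ d ∈ D, ‖∑ x ∈ Finset.range L, (S x : ℂ) * zt d ^ x‖ ^ 2
      ≤ L * ∑ x ∈ Finset.range L, S x ^ 2 := by
  have hLr : (0 : ℝ) < L := by exact_mod_cast hL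
  have hD0 : ∀ d ∈ D, d ≠ 0 := fun d hd h0 => by
    have := hD d hd; rw [h0, zero_dvd_iff] at this; omega
  let v : D → EuclideanSpace ℂ (Fin L) := fun d =>
    WithLp.toLp 2 (fun x => ((Real.sqrt L)⁻¹ : ℂ) * (starRingEnd ℂ) (zt d ^ (x : ℕ)))
  have hsq : ((Real.sqrt L : ℝ) : ℂ) * (Real.sqrt L : ℝ) = L := by
    rw [← Complex.ofReal_mul, Real.mul_self_sqrt hLr.le]; simp
  have hs0 : ((Real.sqrt L : ℝ) : ℂ) ≠ 0 := by
    simpa using (Real.sqrt_pos.mpr hLr).ne'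
  have hv : Orthonormal ℂ v := by
    rw [orthonormal_iff_ite]
    intro d d'
    have : inner ℂ (v d) (v d') = (L : ℂ)⁻¹ *
        ∑ x ∈ Finset.range L, zt d ^ x * (starRingEnd ℂ) (zt d' ^ x) := by
      rw [PiLp.inner_apply, Finset.mul_sum, ← Fin.sum_univ_eq_sum_range
        (fun x => (L : ℂ)⁻¹ * (zt d ^ x * (starRingEnd ℂ) (zt d' ^ x)))]
      refine Finset.sum_congr rfl fun x _ => ?_
      simp only [v, RCLike.inner_apply, map_mul, map_inv₀, Complex.conj_ofReal, ← hsq,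
        Complex.conj_conj, mul_inv]
      ring
    rw [this]
    split_ifs with h
    · subst h
      have : ∀ x ∈ Finset.range L, zt d ^ x * (starRingEnd ℂ) (zt d ^ x) = 1 := by
        intro x _
        rw [Complex.mul_conj, Complex.normSq_eq_norm_sq, norm_pow, zt_norm]; simp
      rw [Finset.sum_congr rfl this]
      have : (L : ℂ) ≠ 0 := by exact_mod_cast hL.ne'
      simp [this]
    · rw [zt_orth (hD0 _ d'.2) (hD0 _ d.2) (hD _ d'.2) (hD _ d.2)
        (fun e => h (Subtype.ext e.symm)), mul_zero]
  have hB := hv.sum_inner_products_le (WithLp.toLp 2 (fun x : Fin L => (S x : ℂ)))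
    (s := Finset.univ)
  rw [EuclideanSpace.norm_sq_eq] at hB
  have e1 : ∀ d : D, ‖inner ℂ (v d) (WithLp.toLp 2 (fun x : Fin L => (S x : ℂ)))‖ ^ 2
      = (L : ℝ)⁻¹ * ‖∑ x ∈ Finset.range L, (S x : ℂ) * zt d ^ x‖ ^ 2 := by
    intro d
    have : inner ℂ (v d) (WithLp.toLp 2 (fun x : Fin L => (S x : ℂ)))
        = ((Real.sqrt L)⁻¹ : ℂ) * ∑ x ∈ Finset.range L, (S x : ℂ) * zt d ^ x := by
      rw [PiLp.inner_apply, Finset.mul_sum, ← Fin.sum_univ_eq_sum_range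
        (fun x => ((Real.sqrt L)⁻¹ : ℂ) * ((S x : ℂ) * zt d ^ x))]
      refine Finset.sum_congr rfl fun x _ => ?_
      simp only [v, RCLike.inner_apply, map_mul, map_inv₀, Complex.conj_ofReal,
        Complex.conj_conj]
      ring
    rw [this, norm_mul, mul_pow, norm_inv, Complex.norm_real,
      Real.norm_of_nonneg (Real.sqrt_nonneg _), inv_pow, Real.sq_sqrt hLr.le]
  have e2 : ∑ x : Fin L, ‖(WithLp.toLp 2 (fun x : Fin L => (S x : ℂ))) x‖ ^ 2
      = ∑ x ∈ Finset.range L, S x ^ 2 := by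
    rw [← Fin.sum_univ_eq_sum_range (fun x => S x ^ 2)]
    refine Finset.sum_congr rfl fun x _ => ?_
    simp
  rw [e2, Finset.sum_congr rfl (fun d _ => e1 d), ← Finset.mul_sum,
    Finset.sum_coe_sort D (fun d => ‖∑ x ∈ Finset.range L, (S x : ℂ) * zt d ^ x‖ ^ 2)] at hB
  rwa [inv_mul_le_iff₀ hLr] at hB

/-! ### Two general lemmas -/

/-- Since `φ(N)/N = ∏ (1 - 1/p)` is at least the telescoping product `∏_{2 ≤ k ≤ K} (1 - 1/k)`. -/
theorem le_mul_totient {N K : ℕ} (hK : 1 ≤ K) (h : ∀ p ∈ N.primeFactors, p ≤ K) :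
    N ≤ K * N.totient := by
  have tel : ∀ K : ℕ, 1 ≤ K → ∏ k ∈ Finset.Icc 2 K, (1 - (k : ℚ)⁻¹) = (K : ℚ)⁻¹ := by
    intro K hK
    induction K, hK using Nat.le_induction with
    | base => simp
    | succ K hK ih =>
      rw [Finset.prod_Icc_succ_top (by omega), ih]
      have : (K : ℚ) ≠ 0 := by positivity
      push_cast
      field_simp
      ring
  have hb : ∀ k ∈ Finset.Icc 2 K, 0 ≤ 1 - (k : ℚ)⁻¹ ∧ 1 - (k : ℚ)⁻¹ ≤ 1 := by
    intro k hk
    have h1 : (1 : ℚ) ≤ k := by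
      have := (Finset.mem_Icc.mp hk).1
      exact_mod_cast (by omega : 1 ≤ k)
    have := inv_le_one_of_one_le₀ h1
    have : 0 ≤ (k : ℚ)⁻¹ := by positivity
    constructor <;> linarith
  have hsub : N.primeFactors ⊆ Finset.Icc 2 K := fun p hp =>
    Finset.mem_Icc.mpr ⟨(Nat.prime_of_mem_primeFactors hp).two_le, h p hp⟩
  have h1 : (K : ℚ)⁻¹ ≤ ∏ p ∈ N.primeFactors, (1 - (p : ℚ)⁻¹) := by
    rw [← tel K hK, ← Finset.prod_sdiff hsub]
    refine mul_le_of_le_one_left (Finset.prod_nonneg fun p hp => (hb p (hsub hp)).1) ?_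
    exact Finset.prod_le_one (fun p hp => (hb p (Finset.sdiff_subset hp)).1)
      (fun p hp => (hb p (Finset.sdiff_subset hp)).2)
  have h2 := Nat.totient_eq_mul_prod_factors N
  have hK0 : (0 : ℚ) < K := by exact_mod_cast hK
  have h3 : (N : ℚ) ≤ K * N.totient := by
    rw [h2]
    calc (N : ℚ) = K * (N * (K : ℚ)⁻¹) := by field_simp
      _ ≤ _ := by gcongr
  exact_mod_cast h3

/-- Fourier coefficient of a sieved weight. Let `d` be the product of a set `T` of primes and `u`, `w p`
functions of period `m` coprime to `d`. Expanding `∏ (1 - 1_{p ∣ x} w p x)` over subsets `t` of `T`,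
the term of `t` has period `m * ∏ t`, on which the character `ζ_d ^ x` is nontrivial unless `t = T`;
so only `t = T` survives, and there the character equals `1`. -/
theorem fourier_eval {T : Finset ℕ} (hT : ∀ p ∈ T, p.Prime) {m : ℕ}
    (hm : m.Coprime (∏ p ∈ T, p)) (u : ℕ → ℂ) (w : ℕ → ℕ → ℂ)
    (hu : ∀ x, u (x + m) = u x) (hw : ∀ p ∈ T, ∀ x, w p (x + m) = w p x) :
    ∑ x ∈ Finset.range ((∏ p ∈ T, p) * m),
      u x * (∏ p ∈ T, (1 - if p ∣ x then w p x else 0)) * zt (∏ p ∈ T, p) ^ x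
    = (-1) ^ T.card * ∑ x ∈ Finset.range ((∏ p ∈ T, p) * m),
      if (∏ p ∈ T, p) ∣ x then u x * ∏ p ∈ T, w p x else 0 := by
  set d := ∏ p ∈ T, p with hd
  have hd0 : d ≠ 0 := Finset.prod_ne_zero_iff.mpr fun p hp => (hT p hp).ne_zero
  have per : ∀ (f : ℕ → ℂ), (∀ x, f (x + m) = f x) → ∀ k x, f (x + k * m) = f x := by
    intro f hf k
    induction k with
    | zero => simp
    | succ k ih => intro x; rw [Nat.succ_mul, ← add_assoc, hf, ih]
  have key : ∀ x, u x * (∏ p ∈ T, (1 - if p ∣ x then w p x else 0)) * zt d ^ x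
      = ∑ t ∈ T.powerset, u x * (∏ p ∈ t, -(if p ∣ x then w p x else 0)) * zt d ^ x := by
    intro x
    simp only [sub_eq_add_neg]
    rw [Finset.prod_one_add, Finset.mul_sum, Finset.sum_mul]
  simp only [key]
  rw [Finset.sum_comm, Finset.sum_eq_single_of_mem T (Finset.mem_powerset_self T)]
  · rw [Finset.mul_sum]
    refine Finset.sum_congr rfl fun x _ => ?_
    split_ifs with hx
    · rw [((zt_prim hd0).pow_eq_one_iff_dvd x).mpr hx, Finset.prod_neg]
      rw [Finset.prod_congr rfl (g := fun p => w p x)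
        (fun p hp => if_pos ((Finset.dvd_prod_of_mem _ hp).trans hx))]
      ring
    · have : ∃ p ∈ T, ¬ p ∣ x := by
        by_contra! hc
        exact hx (Finset.prod_primes_dvd x (fun p hp => (hT p hp).prime) hc)
      obtain ⟨p, hp, hpx⟩ := this
      rw [Finset.prod_eq_zero hp (by simp [hpx])]
      simp
  · intro t ht htT
    have htT' := Finset.mem_powerset.mp ht
    obtain ⟨p, hpT, hpt⟩ : ∃ p ∈ T, p ∉ t := by
      by_contra! hc
      exact htT (Finset.Subset.antisymm htT' hc)
    have hshift : ∀ k, (∀ q ∈ t, q ∣ k) → ∀ x,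
        u (x + k * m) * (∏ p ∈ t, -(if p ∣ x + k * m then w p (x + k * m) else 0))
          = u x * (∏ p ∈ t, -(if p ∣ x then w p x else 0)) := by
      intro k hk x
      rw [per u hu]
      congr 1
      refine Finset.prod_congr rfl fun q hq => ?_
      rw [per (w q) (hw q (htT' hq))]
      have : q ∣ x + k * m ↔ q ∣ x :=
        (Nat.dvd_add_iff_left (Dvd.dvd.mul_right (hk q hq) m)).symm
      simp only [this]
    refine sum_eq_zero_of_shift (s := (∏ q ∈ t, q) * m) (c := zt d ^ ((∏ q ∈ t, q) * m)) ?_ ?_ ?_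
    · intro x
      rw [hshift d (fun q hq => Finset.dvd_prod_of_mem _ (htT' hq)),
        zt_pow_period hd0 (Dvd.intro _ rfl)]
    · intro h1
      have h2 := ((zt_prim hd0).pow_eq_one_iff_dvd _).mp h1
      have hpd : p ∣ d := Finset.dvd_prod_of_mem _ hpT
      have hpp := hT p hpT
      rcases (hpp.dvd_mul).mp (hpd.trans h2) with h3 | h3
      · obtain ⟨q, hq, hpq⟩ := (hpp.prime.dvd_finsetProd_iff _).mp h3
        have := (Nat.prime_dvd_prime_iff_eq hpp (hT q (htT' hq))).mp hpq
        exact hpt (this ▸ hq)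
      · exact hpp.one_lt.ne' (Nat.eq_one_of_dvd_coprimes hm h3 hpd)
    · intro x
      rw [hshift _ (fun q hq => Finset.dvd_prod_of_mem _ hq), pow_add]
      ring

/-! ### The large primes and the sieve by `[n, 2n]` -/

/-- The primes in `(√(2n), 2n]`. A number up to `2n` has at most one prime factor in this set, and
that factor to the first power only. -/
def Qs (n : ℕ) : Finset ℕ := {p ∈ Finset.Icc 1 (2 * n) | p.Prime ∧ 2 * n < p * p}

/-- The product of all `i ≤ 2n` without a prime factor in `Qs n`. Multiplied by the product of `Qs n`
it gives a period of the multiples of `[n, 2n]` in which the primes of `Qs n` occur exactly once;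
nothing else about its size matters. -/
noncomputable def Ws (n : ℕ) : ℕ :=
  ∏ i ∈ {i ∈ Finset.Icc 1 (2 * n) | Nat.Coprime i (∏ p ∈ Qs n, p)}, i

theorem mem_Qs {n p : ℕ} : p ∈ Qs n ↔ p.Prime ∧ p ≤ 2 * n ∧ 2 * n < p * p := by
  simp only [Qs, Finset.mem_filter, Finset.mem_Icc]
  exact ⟨fun h => ⟨h.2.1, h.1.2, h.2.2⟩, fun h => ⟨⟨h.1.one_lt.le, h.2.1⟩, h.1, h.2.2⟩⟩

theorem Ws_pos (n : ℕ) : 0 < Ws n :=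
  Finset.prod_pos fun _ hi => by simp at hi; omega

theorem Ws_coprime (n : ℕ) : (Ws n).Coprime (∏ p ∈ Qs n, p) :=
  Nat.Coprime.prod_left fun _ hi => (Finset.mem_filter.mp hi).2

theorem dvd_Ws {n i : ℕ} (h1 : 1 ≤ i) (h2 : i ≤ 2 * n) (hc : ∀ p ∈ Qs n, ¬ p ∣ i) :
    i ∣ Ws n := by
  refine Finset.dvd_prod_of_mem (fun i => i) ?_
  simp only [Finset.mem_filter, Finset.mem_Icc]
  refine ⟨⟨h1, h2⟩, Nat.Coprime.prod_right fun p hp => ?_⟩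
  exact (((mem_Qs.mp hp).1.coprime_iff_not_dvd).mpr (hc p hp)).symm

/-- If `k p ≤ 2n` with `p` a large prime, then `k` has no large prime factor. -/
theorem cofactor_not_dvd {n p q k : ℕ} (hp : p ∈ Qs n) (hq : q ∈ Qs n) (hk : 1 ≤ k)
    (h : k * p ≤ 2 * n) : ¬ q ∣ k := by
  intro hqk
  have h1 := (mem_Qs.mp hp).2.2
  have h2 := (mem_Qs.mp hq).2.2
  have h3 : q ≤ k := Nat.le_of_dvd hk hqk
  have h4 : q * p ≤ 2 * n := (Nat.mul_le_mul_right p h3).trans h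
  rcases le_total p q with h5 | h5
  · have := Nat.mul_le_mul_right p h5; omega
  · have := Nat.mul_le_mul_left q h5; omega

theorem cofactor_dvd_Ws {n p k : ℕ} (hp : p ∈ Qs n) (hk : 1 ≤ k) (h : k * p ≤ 2 * n) :
    k ∣ Ws n := by
  refine dvd_Ws hk ?_ fun q hq => cofactor_not_dvd hp hq hk h
  have := (mem_Qs.mp hp).1.pos
  nlinarith

theorem dvd_period {n a : ℕ} (h1 : 1 ≤ a) (h2 : a ≤ 2 * n) :
    a ∣ (∏ p ∈ Qs n, p) * Ws n := by
  by_cases hc : ∃ p ∈ Qs n, p ∣ a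
  · obtain ⟨p, hp, k, rfl⟩ := hc
    have hk : 1 ≤ k := Nat.pos_of_ne_zero (by rintro rfl; simp at h1)
    exact mul_dvd_mul (Finset.dvd_prod_of_mem _ hp)
      (cofactor_dvd_Ws hp hk (by rwa [mul_comm]))
  · push Not at hc
    exact (dvd_Ws h1 h2 hc).mul_left _

theorem prime_le_of_dvd_period {n q : ℕ} (hq : q.Prime) (h : q ∣ (∏ p ∈ Qs n, p) * Ws n) :
    q ≤ 2 * n := by
  rcases hq.dvd_mul.mp h with h | h
  · obtain ⟨p, hp, hqp⟩ := (hq.prime.dvd_finsetProd_iff _).mp h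
    exact (Nat.le_of_dvd (mem_Qs.mp hp).1.pos hqp).trans (mem_Qs.mp hp).2.1
  · obtain ⟨i, hi, hqi⟩ := (hq.prime.dvd_finsetProd_iff _).mp h
    simp only [Finset.mem_filter, Finset.mem_Icc] at hi
    exact (Nat.le_of_dvd hi.1.1 hqi).trans hi.1.2

/-- `m` is a multiple of some integer in `[n, 2n]`. -/
def Hit (n m : ℕ) : Prop := ∃ a : ℕ, n ≤ a ∧ a ≤ 2 * n ∧ a ∣ m

/-- Sorting the divisors `a ∈ [n, 2n]` of `x` by their prime factor in `T`: either there is none, or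
`a = k p` with a single `p ∈ T` and `k` free of large primes. -/
theorem hit_iff {n : ℕ} (hn : 1 ≤ n) {T : Finset ℕ} (hT : T ⊆ Qs n) (x : ℕ) :
    Hit n x ↔ (∃ a, n ≤ a ∧ a ≤ 2 * n ∧ a.Coprime (∏ p ∈ T, p) ∧ a ∣ x) ∨
      ∃ p ∈ T, p ∣ x ∧ ∃ k, n ≤ k * p ∧ k * p ≤ 2 * n ∧ k ∣ x := by
  constructor
  · rintro ⟨a, h1, h2, h3⟩
    by_cases hc : a.Coprime (∏ p ∈ T, p)
    · exact Or.inl ⟨a, h1, h2, hc, h3⟩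
    · right
      have : ∃ p ∈ T, p ∣ a := by
        by_contra! h
        exact hc (Nat.Coprime.prod_right fun p hp =>
          (((mem_Qs.mp (hT hp)).1.coprime_iff_not_dvd).mpr (h p hp)).symm)
      obtain ⟨p, hp, k, rfl⟩ := this
      exact ⟨p, hp, (Dvd.intro _ rfl).trans h3, k, by rwa [mul_comm], by rwa [mul_comm],
        (Dvd.intro_left _ rfl).trans h3⟩
  · rintro (⟨a, h1, h2, _, h3⟩ | ⟨p, hp, hpx, k, h1, h2, hk⟩)
    · exact ⟨a, h1, h2, h3⟩
    · refine ⟨k * p, h1, h2, ?_⟩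
      have hk1 : 1 ≤ k := Nat.pos_of_ne_zero (by rintro rfl; omega)
      refine Nat.Coprime.mul_dvd_of_dvd_of_dvd ?_ hk hpx
      exact (((mem_Qs.mp (hT hp)).1.coprime_iff_not_dvd).mpr
        (cofactor_not_dvd (hT hp) (hT hp) hk1 h2)).symm

/-- Every large prime has a power-of-two multiple in `[n, 2n]`, the power of two being
less than `n` as soon as `n ≥ 2`. -/
theorem exists_two_pow_mul {n p : ℕ} (hp : p ∈ Qs n) :
    ∃ j ≤ Nat.log 2 (n - 1), n ≤ 2 ^ j * p ∧ 2 ^ j * p ≤ 2 * n := by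
  obtain ⟨hpp, h1, h2⟩ := mem_Qs.mp hp
  have hex : ∃ j, n ≤ 2 ^ j * p :=
    ⟨n, (Nat.lt_two_pow_self (n := n)).le.trans (Nat.le_mul_of_pos_right _ hpp.pos)⟩
  have hspec := Nat.find_spec hex
  rcases hj : Nat.find hex with _ | i
  · rw [hj] at hspec
    exact ⟨0, Nat.zero_le _, hspec, by simpa using h1⟩
  · rw [hj] at hspec
    have hi : 2 ^ i * p < n := by
      have := Nat.find_min hex (m := i) (by omega)
      omega
    refine ⟨i + 1, ?_, hspec, by rw [pow_succ, mul_right_comm]; omega⟩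
    by_contra hlt
    have hle : 2 ^ (Nat.log 2 (n - 1)) ≤ 2 ^ i := Nat.pow_le_pow_right (by omega) (by omega)
    have h3 := Nat.lt_pow_succ_log_self (b := 2) (by omega) (n - 1)
    rw [pow_succ] at h3
    have h4 : 2 ^ i * 2 ≤ 2 ^ i * p := Nat.mul_le_mul_left _ hpp.two_le
    omega

/-- Lower bound for the Fourier coefficient, at the frequency `1/d`, of the indicator of the integers
missed by `[n, 2n]`, where `d` is a product of large primes. With `2 ^ J` the largest power of two
below `n`, the count provided by `fourier_eval` is at least the number of `d * 2 ^ J * z` in a period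
with `z` coprime to the period divided by `d * 2 ^ J`: such a `z` creates no divisor in `[n, 2n]` coprime to
`d`, while `2 ^ J` supplies a divisor `2 ^ j` with `2 ^ j * p ∈ [n, 2n]` for every `p ∣ d`. -/
theorem fourier_lower {n : ℕ} (hn : 2 ≤ n) {T : Finset ℕ} (hT : T ⊆ Qs n) :
    (((∏ p ∈ Qs n, p) * Ws n : ℕ) : ℝ) ≤ 2 * (n : ℝ) ^ 2 * (∏ p ∈ T, p : ℕ) *
      ‖∑ x ∈ Finset.range ((∏ p ∈ Qs n, p) * Ws n),
        (if Hit n x then (0 : ℂ) else 1) * zt (∏ p ∈ T, p) ^ x‖ := by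
  have hTp : ∀ p ∈ T, p.Prime := fun p hp => (mem_Qs.mp (hT hp)).1
  set d := ∏ p ∈ T, p with hd
  set m := (∏ p ∈ Qs n \ T, p) * Ws n with hmdef
  have hL : (∏ p ∈ Qs n, p) * Ws n = d * m := by
    rw [hmdef, ← mul_assoc, hd, mul_comm (∏ p ∈ T, p), Finset.prod_sdiff hT]
  have hd0 : 0 < d := Finset.prod_pos fun p hp => (hTp p hp).pos
  have hm0 : 0 < m := Nat.mul_pos (Finset.prod_pos fun p hp =>
    (mem_Qs.mp (Finset.sdiff_subset hp)).1.pos) (Ws_pos n)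
  have hWm : Ws n ∣ m := Dvd.intro_left _ rfl
  have hm : m.Coprime d := by
    refine Nat.Coprime.mul_left ?_ ((Ws_coprime n).coprime_dvd_right
      (Finset.prod_dvd_prod_of_subset _ _ _ hT))
    refine Nat.Coprime.prod_left fun p hp => Nat.Coprime.prod_right fun q hq => ?_
    have hp' := Finset.mem_sdiff.mp hp
    exact (Nat.coprime_primes (mem_Qs.mp hp'.1).1 (hTp q hq)).mpr
      (fun h => hp'.2 (h ▸ hq))
  -- `m = 2 ^ J * M` with `2 ^ J < n` and `M` even
  set J := Nat.log 2 (n - 1) with hJ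
  have hJn : 2 ^ J ≤ n - 1 := Nat.pow_log_le_self 2 (by omega)
  have h2W : 2 ^ (J + 1) ∣ m := by
    refine (dvd_Ws Nat.one_le_two_pow (by rw [pow_succ]; omega) ?_).trans hWm
    intro p hp hdvd
    have h2 := (Nat.prime_dvd_prime_iff_eq (mem_Qs.mp hp).1 Nat.prime_two).mp
      ((mem_Qs.mp hp).1.dvd_of_dvd_pow hdvd)
    have := (mem_Qs.mp hp).2.2
    subst h2
    -- only `n = 1` is compatible with `2 * n < 4`
    omega
  obtain ⟨M', hM'⟩ := h2W
  set M := 2 * M' with hM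
  have hmM : m = 2 ^ J * M := by rw [hM', hM, pow_succ]; ring
  have hM0 : 0 < M := Nat.pos_of_ne_zero (by rintro h; rw [h] at hmM; omega)
  -- `u x`: no divisor of `x` in `[n, 2n]` is coprime to `d`;
  -- `w p x`: if `p ∣ x`, then `x` has a divisor `k p` in `[n, 2n]`
  let u : ℕ → Prop := fun x => ¬ ∃ a, n ≤ a ∧ a ≤ 2 * n ∧ a.Coprime d ∧ a ∣ x
  let w : ℕ → ℕ → Prop := fun p x => ∃ k, n ≤ k * p ∧ k * p ≤ 2 * n ∧ k ∣ x
  have ham : ∀ a, n ≤ a → a ≤ 2 * n → a.Coprime d → a ∣ m := by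
    intro a h1 h2 h3
    have := dvd_period (n := n) (a := a) (by omega) h2
    rw [hL] at this
    exact h3.dvd_of_dvd_mul_left this
  have hu : ∀ x, u (x + m) ↔ u x := by
    intro x
    refine not_congr (exists_congr fun a => ?_)
    refine and_congr_right fun h1 => and_congr_right fun h2 => and_congr_right fun h3 => ?_
    exact (Nat.dvd_add_iff_left (ham a h1 h2 h3)).symm
  have hw : ∀ p ∈ T, ∀ x, w p (x + m) ↔ w p x := by
    intro p hp x
    refine exists_congr fun k => and_congr_right fun h1 => and_congr_right fun h2 => ?_
    have hk1 : 1 ≤ k := Nat.pos_of_ne_zero (by rintro rfl; omega)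
    exact (Nat.dvd_add_iff_left ((cofactor_dvd_Ws (hT hp) hk1 h2).trans hWm)).symm
  have hdec : ∀ x, (if Hit n x then (0 : ℂ) else 1) = (if u x then 1 else 0) *
      ∏ p ∈ T, (1 - if p ∣ x then (if w p x then 1 else 0) else 0) := by
    intro x
    have hh := hit_iff (by omega : 1 ≤ n) hT x
    by_cases h1 : u x
    · by_cases h2 : ∃ p ∈ T, p ∣ x ∧ w p x
      · obtain ⟨p, hp, h3, h4⟩ := h2
        rw [if_pos (hh.mpr (Or.inr ⟨p, hp, h3, h4⟩)), Finset.prod_eq_zero hp, mul_zero]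
        rw [if_pos h3, if_pos h4, sub_self]
      · rw [if_neg (fun h => (hh.mp h).elim h1 h2), if_pos h1, Finset.prod_eq_one, mul_one]
        intro p hp
        by_cases h3 : p ∣ x
        · rw [if_pos h3, if_neg (fun h4 => h2 ⟨p, hp, h3, h4⟩), sub_zero]
        · rw [if_neg h3, sub_zero]
    · rw [if_neg h1, zero_mul, if_pos (hh.mpr (Or.inl (not_not.mp h1)))]
  have hfe := fourier_eval hTp hm (fun x => if u x then 1 else 0)
    (fun p x => if w p x then 1 else 0) (fun x => by simp only [hu])
    (fun p hp x => by simp only [hw p hp])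
  rw [← hd] at hfe
  rw [hL]
  simp only [hdec]
  rw [hfe, norm_mul, norm_pow, norm_neg, norm_one, one_pow, one_mul]
  have hcount : ∑ x ∈ Finset.range (d * m), (if d ∣ x then (if u x then (1 : ℂ) else 0) *
      ∏ p ∈ T, (if w p x then 1 else 0) else 0)
      = (({x ∈ Finset.range (d * m) | d ∣ x ∧ u x ∧ ∀ p ∈ T, w p x}.card : ℕ) : ℂ) := by
    rw [Finset.card_filter]
    push_cast
    refine Finset.sum_congr rfl fun x _ => ?_
    by_cases h1 : d ∣ x <;> by_cases h2 : u x <;> simp [h1, h2, Finset.prod_ite_zero]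
  rw [hcount, Complex.norm_natCast]
  have hcard : M.totient ≤
      {x ∈ Finset.range (d * m) | d ∣ x ∧ u x ∧ ∀ p ∈ T, w p x}.card := by
    rw [Nat.totient]
    refine Finset.card_le_card_of_injOn (fun z => d * (2 ^ J * z)) ?_ ?_
    · intro z hz
      have hz' := Finset.mem_filter.mp (Finset.mem_coe.mp hz)
      have hzM := Finset.mem_range.mp hz'.1
      refine Finset.mem_coe.mpr (Finset.mem_filter.mpr ⟨?_, Dvd.intro _ rfl, ?_, ?_⟩)
      · rw [Finset.mem_range, hmM]
        exact (Nat.mul_lt_mul_left hd0).mpr ((Nat.mul_lt_mul_left (by positivity)).mpr hzM)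
      · rintro ⟨a, h1, h2, h3, h4⟩
        have h5 : a ∣ 2 ^ J * z := h3.dvd_of_dvd_mul_left h4
        -- `M` is even, so being coprime to `M` is being coprime to `m = 2 ^ J * M`
        have hzm : z.Coprime m := by
          rw [hmM]
          refine Nat.Coprime.mul_right (Nat.Coprime.pow_right _ ?_) hz'.2.symm
          exact (hz'.2.coprime_dvd_left (Dvd.intro _ rfl)).symm
        have h6 : a ∣ 2 ^ J :=
          ((hzm.coprime_dvd_right (ham a h1 h2 h3)).symm).dvd_of_dvd_mul_right h5
        have := Nat.le_of_dvd (by positivity) h6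
        omega
      · intro p hp
        obtain ⟨j, hj, h1, h2⟩ := exists_two_pow_mul (hT hp)
        exact ⟨2 ^ j, h1, h2, ((pow_dvd_pow 2 hj).mul_right z).mul_left d⟩
    · intro z _ z' _ h
      have h' : 2 ^ J * z = 2 ^ J * z' := Nat.eq_of_mul_eq_mul_left hd0 h
      exact Nat.eq_of_mul_eq_mul_left (by positivity) h'
  have htot : M ≤ 2 * n * M.totient := by
    refine le_mul_totient (by omega) fun q hq => ?_
    refine prime_le_of_dvd_period (Nat.prime_of_mem_primeFactors hq) ?_
    rw [hL, hmM]
    exact ((Nat.dvd_of_mem_primeFactors hq).mul_left _).mul_left _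
  have hfin : d * m ≤ 2 * n ^ 2 * d *
      {x ∈ Finset.range (d * m) | d ∣ x ∧ u x ∧ ∀ p ∈ T, w p x}.card := by
    calc d * m = d * (2 ^ J * M) := by rw [hmM]
      _ ≤ d * (n * (2 * n * M.totient)) := by gcongr; omega
      _ = 2 * n ^ 2 * d * M.totient := by ring
      _ ≤ _ := by gcongr
  exact_mod_cast hfin

/-! ### The remainder and its mean square -/

theorem hit_add_period {n : ℕ} (hn : 1 ≤ n) (x : ℕ) :
    Hit n (x + (∏ p ∈ Qs n, p) * Ws n) ↔ Hit n x :=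
  exists_congr fun _ => and_congr_right fun h1 => and_congr_right fun h2 =>
    (Nat.dvd_add_iff_left (dvd_period (by omega) h2)).symm

theorem period_pos (n : ℕ) : 0 < (∏ p ∈ Qs n, p) * Ws n :=
  Nat.mul_pos (Finset.prod_pos fun _ hp => (mem_Qs.mp hp).1.pos) (Ws_pos n)

theorem Mcount_zero (n : ℕ) : Mcount n ((0 : ℕ) : ℝ) = 0 := by
  simp [Mcount]

theorem Mcount_succ (n k : ℕ) :
    Mcount n ((k + 1 : ℕ) : ℝ) = Mcount n (k : ℝ) + if Hit n (k + 1) then 1 else 0 := by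
  unfold Mcount
  rw [Nat.floor_natCast, Nat.floor_natCast, Finset.card_filter, Finset.card_filter,
    Finset.sum_Icc_succ_top (by omega)]
  rfl

theorem Mcount_add_period {n : ℕ} (hn : 1 ≤ n) (k : ℕ) :
    Mcount n ((k + (∏ p ∈ Qs n, p) * Ws n : ℕ) : ℝ)
      = Mcount n (k : ℝ) + Mcount n (((∏ p ∈ Qs n, p) * Ws n : ℕ) : ℝ) := by
  induction k with
  | zero => rw [Mcount_zero, zero_add, zero_add]
  | succ k ih =>
    rw [add_right_comm, Mcount_succ, ih, Mcount_succ]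
    have := hit_add_period hn (k + 1)
    rw [add_right_comm] at this
    simp only [this]
    ring

/-- The density is the proportion of hits in one period. -/
theorem density_eq {n : ℕ} (hn : 2 ≤ n) {δ : ℝ}
    (h : HasDensity (setOfMultiples {a : ℕ | n ≤ a ∧ a ≤ 2 * n}) δ) :
    δ * ((∏ p ∈ Qs n, p) * Ws n : ℕ) = Mcount n (((∏ p ∈ Qs n, p) * Ws n : ℕ) : ℝ) := by
  set L := (∏ p ∈ Qs n, p) * Ws n with hL
  have hL0 : 0 < L := period_pos n
  have hL0' : (0 : ℝ) < L := by exact_mod_cast hL0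
  have hcount : ∀ N : ℕ, countIn (setOfMultiples {a : ℕ | n ≤ a ∧ a ≤ 2 * n}) N
      = Mcount n (N : ℝ) := by
    intro N
    unfold countIn Mcount
    rw [Nat.floor_natCast]
    congr 1
    refine Finset.filter_congr fun m hm => ?_
    have hm1 := (Finset.mem_Icc.mp hm).1
    constructor
    · rintro ⟨a, ⟨h1, h2⟩, c, _, rfl⟩
      exact ⟨a, h1, h2, Dvd.intro_left _ rfl⟩
    · rintro ⟨a, h1, h2, c, rfl⟩
      exact ⟨a, ⟨h1, h2⟩, c, Nat.pos_of_ne_zero (by rintro rfl; simp at hm1), mul_comm _ _⟩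
  have hk : ∀ k : ℕ, Mcount n ((k * L : ℕ) : ℝ) = k * Mcount n ((L : ℕ) : ℝ) := by
    intro k
    induction k with
    | zero => simp [Mcount]
    | succ k ih => rw [Nat.succ_mul, hL, Mcount_add_period (by omega), ← hL, ih]; ring
  have h1 : Tendsto (fun k : ℕ => k * L) atTop atTop :=
    tendsto_id.atTop_mul_const' hL0
  have h2 := (show Tendsto _ _ _ from h).comp h1
  have h3 : Tendsto (fun _ : ℕ => (Mcount n ((L : ℕ) : ℝ) : ℝ) / L) atTop (nhds δ) := by
    refine h2.congr' ?_
    filter_upwards [eventually_gt_atTop 0] with k hk0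
    have : (k : ℝ) ≠ 0 := by positivity
    simp only [Function.comp, hcount, hk]
    push_cast
    field_simp
  have h4 := tendsto_nhds_unique h3 tendsto_const_nhds
  rw [h4, div_mul_cancel₀ _ hL0'.ne']

/-- Summation by parts: at the frequency `1/d`, the Fourier coefficient of the remainder is that of
the indicator of the integers missed by `[n, 2n]`, divided by `ζ_d - 1`, which has size `O(1/d)`. -/
theorem remainder_fourier {n : ℕ} (hn : 2 ≤ n) {δ : ℝ}
    (hδ : δ * ((∏ p ∈ Qs n, p) * Ws n : ℕ) = Mcount n (((∏ p ∈ Qs n, p) * Ws n : ℕ) : ℝ))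
    {d : ℕ} (hd : 2 ≤ d) (hdL : d ∣ (∏ p ∈ Qs n, p) * Ws n) :
    (zt d - 1) * ∑ x ∈ Finset.range ((∏ p ∈ Qs n, p) * Ws n),
        (((Mcount n (x : ℝ) : ℝ) - δ * x : ℝ) : ℂ) * zt d ^ x
      = ∑ x ∈ Finset.range ((∏ p ∈ Qs n, p) * Ws n),
        (if Hit n x then (0 : ℂ) else 1) * zt d ^ x := by
  set L := (∏ p ∈ Qs n, p) * Ws n with hL
  have hd0 : d ≠ 0 := by omega
  have hz1 : zt d ≠ 1 := (zt_prim hd0).ne_one (by omega)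
  let F : ℕ → ℂ := fun x => (((Mcount n (x : ℝ) : ℝ) - δ * x : ℝ) : ℂ) * zt d ^ x
  let G : ℕ → ℂ := fun x => (if Hit n x then (0 : ℂ) else 1) * zt d ^ x
  have hF : ∀ x, F (x + L) = F x := by
    intro x
    simp only [F]
    rw [zt_pow_period hd0 hdL, hL, Mcount_add_period (by omega), ← hL]
    congr 2
    push_cast at hδ ⊢
    linarith
  have hG : ∀ x, G (x + L) = G x := by
    intro x
    simp only [G]
    rw [zt_pow_period hd0 hdL]
    simp only [hL, hit_add_period (show 1 ≤ n by omega)]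
  have hZ : ∑ x ∈ Finset.range L, zt d ^ x = 0 :=
    sum_eq_zero_of_shift (s := 1) (zt_pow_period hd0 hdL) hz1 fun x => pow_succ' _ _
  have hstep : ∀ x, F (x + 1) = zt d * F x + (1 - δ) * zt d * zt d ^ x - G (x + 1) := by
    intro x
    simp only [F, G]
    rw [Mcount_succ]
    split_ifs <;> push_cast <;> ring
  have h1 := sum_range_shift hF 1
  simp only [hstep, Finset.sum_sub_distrib, Finset.sum_add_distrib, ← Finset.mul_sum] at h1
  rw [sum_range_shift hG 1, hZ, mul_zero, add_zero] at h1
  linear_combination h1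

/-- Any bound `B` for the remainder at integers is exponentially large in the number of large primes:
each of the `2 ^ |Q| - 1` divisors `d > 1` of their product contributes at least a fixed amount to
the mean square of the remainder. -/
theorem remainder_bound {n : ℕ} (hn : 2 ≤ n) {δ : ℝ}
    (hδ : δ * ((∏ p ∈ Qs n, p) * Ws n : ℕ) = Mcount n (((∏ p ∈ Qs n, p) * Ws n : ℕ) : ℝ))
    {B : ℝ} (hB : ∀ k : ℕ, |(Mcount n (k : ℝ) : ℝ) - δ * k| ≤ B) :
    (2 : ℝ) ^ (Qs n).card - 1 ≤ (4 * Real.pi * n ^ 2 * B) ^ 2 := by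
  set L := (∏ p ∈ Qs n, p) * Ws n with hL
  have hL0 : 0 < L := period_pos n
  have hL0' : (0 : ℝ) < L := by exact_mod_cast hL0
  have hn0 : (0 : ℝ) < n := by exact_mod_cast (by omega : 0 < n)
  have hpi := Real.pi_pos
  set D := ((Qs n).powerset.erase ∅).image (fun T => ∏ p ∈ T, p) with hD
  have hcard : D.card = 2 ^ (Qs n).card - 1 := by
    rw [hD, Finset.card_image_of_injOn, Finset.card_erase_of_mem (by simp),
      Finset.card_powerset]
    intro T hT T' hT' h
    have hp : ∀ T ∈ (Qs n).powerset.erase ∅, ∀ p ∈ T, p.Prime := fun T hT p hp =>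
      (mem_Qs.mp (Finset.mem_powerset.mp (Finset.mem_of_mem_erase hT) hp)).1
    rw [← Nat.primeFactors_prod (hp T hT), ← Nat.primeFactors_prod (hp T' hT')]
    exact congrArg _ h
  have hdvd : ∀ d ∈ D, d ∣ L := by
    intro d hd
    obtain ⟨T, hT, rfl⟩ := Finset.mem_image.mp hd
    exact (Finset.prod_dvd_prod_of_subset _ _ _
      (Finset.mem_powerset.mp (Finset.mem_of_mem_erase hT))).mul_right _
  have hbes := zt_bessel hL0 D hdvd (fun x => (Mcount n (x : ℝ) : ℝ) - δ * x)
  have hlow : ∀ d ∈ D, ((L : ℝ) / (4 * Real.pi * n ^ 2)) ^ 2 ≤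
      ‖∑ x ∈ Finset.range L, (((Mcount n (x : ℝ) : ℝ) - δ * x : ℝ) : ℂ) * zt d ^ x‖ ^ 2 := by
    intro d hd
    have hdL := hdvd d hd
    obtain ⟨T, hT, rfl⟩ := Finset.mem_image.mp hd
    have hTQ := Finset.mem_powerset.mp (Finset.mem_of_mem_erase hT)
    have hd2 : 2 ≤ ∏ p ∈ T, p := by
      obtain ⟨p, hp⟩ := Finset.nonempty_of_ne_empty (Finset.ne_of_mem_erase hT)
      have hpos : 0 < ∏ p ∈ T, p :=
        Finset.prod_pos fun q hq => (mem_Qs.mp (hTQ hq)).1.pos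
      exact (mem_Qs.mp (hTQ hp)).1.two_le.trans
        (Nat.le_of_dvd hpos (Finset.dvd_prod_of_mem _ hp))
    have h1 := fourier_lower hn hTQ
    rw [← hL, ← remainder_fourier hn hδ hd2 hdL, norm_mul, ← hL] at h1
    have hd0 : (0 : ℝ) < (∏ p ∈ T, p : ℕ) := by exact_mod_cast (by omega : 0 < ∏ p ∈ T, p)
    have h2 := zt_sub_one (∏ p ∈ T, p)
    set H := ‖∑ x ∈ Finset.range L,
      (((Mcount n (x : ℝ) : ℝ) - δ * x : ℝ) : ℂ) * zt (∏ p ∈ T, p) ^ x‖ with hH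
    have hH0 : 0 ≤ H := norm_nonneg _
    refine pow_le_pow_left₀ (by positivity) ?_ 2
    rw [div_le_iff₀ (by positivity)]
    calc (L : ℝ) ≤ _ := h1
      _ ≤ 2 * (n : ℝ) ^ 2 * (∏ p ∈ T, p : ℕ) * (2 * Real.pi / (∏ p ∈ T, p : ℕ) * H) := by
        gcongr
      _ = H * (4 * Real.pi * n ^ 2) := by field_simp; ring
  have hup : ∑ x ∈ Finset.range L, ((Mcount n (x : ℝ) : ℝ) - δ * x) ^ 2 ≤ L * B ^ 2 := by
    calc _ ≤ ∑ x ∈ Finset.range L, B ^ 2 := by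
          refine Finset.sum_le_sum fun x _ => ?_
          rw [← sq_abs]
          exact pow_le_pow_left₀ (abs_nonneg _) (hB x) 2
      _ = L * B ^ 2 := by simp
  have hall := (Finset.card_nsmul_le_sum D _ _ hlow).trans (hbes.trans
    (mul_le_mul_of_nonneg_left hup hL0'.le))
  rw [nsmul_eq_mul, hcard, Nat.cast_sub Nat.one_le_two_pow] at hall
  push_cast at hall
  have h5 : ((2 : ℝ) ^ (Qs n).card - 1) * L ^ 2 ≤ (4 * Real.pi * n ^ 2 * B) ^ 2 * L ^ 2 := by
    rw [div_pow, mul_div_assoc', div_le_iff₀ (by positivity)] at hall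
    calc _ ≤ _ := hall
      _ = _ := by ring
  exact le_of_mul_le_mul_right h5 (by positivity)

/-! ### Counting the large primes -/

theorem card_Qs (n : ℕ) : Nat.primeCounting (2 * n) ≤ (Qs n).card + Nat.sqrt (2 * n) := by
  rw [← Nat.primesLE_card_eq_primeCounting]
  have hsub : Nat.primesLE (2 * n) ⊆ Qs n ∪ Finset.Icc 1 (Nat.sqrt (2 * n)) := by
    intro p hp
    obtain ⟨h1, h2⟩ := Nat.mem_primesLE.mp hp
    rw [Finset.mem_union, mem_Qs, Finset.mem_Icc]
    by_cases h : 2 * n < p * p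
    · exact Or.inl ⟨h2, h1, h⟩
    · exact Or.inr ⟨h2.one_lt.le, Nat.le_sqrt.mpr (by omega)⟩
  calc _ ≤ _ := Finset.card_le_card hsub
    _ ≤ _ := Finset.card_union_le _ _
    _ = _ := by simp

/-- Chebyshev's bound `π(2n) ≳ 2 log 2 · n / log n` suffices since `2 log 2 > 1`; the surplus absorbs
the `√(2n)` discarded primes and the polynomial losses. -/
theorem card_Qs_large : ∀ᶠ n : ℕ in atTop,
    (n : ℝ) / Real.log n + 9 + 4 * (Real.log n / Real.log 2) ≤ (Qs n).card := by
  have hlog : ∀ᶠ n : ℕ in atTop, Real.log n ≤ (n : ℝ) ^ (1 / 4 : ℝ) := by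
    have := (isLittleO_log_rpow_atTop (r := 1 / 4) (by norm_num)).bound (c := 1) one_pos
    have h2 := tendsto_natCast_atTop_atTop (R := ℝ) |>.eventually this
    filter_upwards [h2] with n hn
    rw [one_mul, Real.norm_of_nonneg (by positivity : 0 ≤ (n : ℝ) ^ (1 / 4 : ℝ))] at hn
    exact (le_abs_self _).trans hn
  have hl14 : ∀ᶠ n : ℕ in atTop, 20 ≤ Real.log n :=
    (Real.tendsto_log_atTop.comp tendsto_natCast_atTop_atTop).eventually_ge_atTop 20
  have ht : ∀ᶠ n : ℕ in atTop, 100 ≤ (n : ℝ) ^ (1 / 4 : ℝ) :=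
    ((tendsto_rpow_atTop (by norm_num)).comp tendsto_natCast_atTop_atTop).eventually_ge_atTop 100
  filter_upwards [hlog, hl14, ht, eventually_ge_atTop 3] with n h1 h2 h3 h4
  have hn3 : (3 : ℝ) ≤ n := by exact_mod_cast h4
  -- with `t = n ^ (1/4)` the remaining estimates are polynomial inequalities in `t`
  set t := (n : ℝ) ^ (1 / 4 : ℝ) with htdef
  set l := Real.log n with hl
  have htn : t ^ 4 = n := by
    rw [htdef, ← Real.rpow_natCast, ← Real.rpow_mul (by positivity)]; norm_num
  have hc := card_Qs n
  have hpi := Chebyshev.pi_ge (2 * n)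
  have hs : (Nat.sqrt (2 * n) : ℝ) ≤ 1.5 * t ^ 2 := by
    have : (Nat.sqrt (2 * n) : ℝ) ^ 2 ≤ 2 * n := by exact_mod_cast Nat.sqrt_le' (2 * n)
    refine abs_le_of_sq_le_sq' ?_ (by positivity) |>.2
    rw [← htn] at this
    nlinarith [sq_nonneg (t ^ 2)]
  have hln2 := Real.log_two_gt_d9
  have hln2' := Real.log_two_lt_d9
  have e1 : Real.log ((2 * n : ℕ) : ℝ) = l + Real.log 2 := by
    push_cast; rw [Real.log_mul (by norm_num) (by positivity)]; ring
  have e2 : Real.log (((2 * n : ℕ) : ℝ) + 1) ≤ 2 * l := by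
    have : Real.log ((n : ℝ) ^ 2) = 2 * l := by rw [Real.log_pow, hl]; norm_num
    rw [← this]
    refine Real.log_le_log (by positivity) ?_
    push_cast; nlinarith
  rw [e1] at hpi
  have hl0 : 0 < l := by linarith
  have hpi2 : 1.3 * (n / l) ≤ (Nat.primeCounting (2 * n) : ℝ) := by
    refine le_trans ?_ hpi
    rw [le_div_iff₀ (by linarith)]
    have ha : (l + Real.log 2) / l ≤ 1.05 := by
      rw [div_le_iff₀ hl0]; linarith
    have hb : 1.3 * (n / l) * (l + Real.log 2) = 1.3 * n * ((l + Real.log 2) / l) := by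
      field_simp
    have hb2 : 1.3 * n * ((l + Real.log 2) / l) ≤ 1.3 * n * 1.05 := by gcongr
    have hln : l ≤ 0.001 * n := by
      rw [← htn]
      nlinarith [pow_le_pow_left₀ (by norm_num) h3 3]
    have hcast : ((2 * n : ℕ) : ℝ) * Real.log 2 ≥ 2 * n * 0.693 := by
      push_cast; gcongr; linarith
    rw [hb]
    linarith
  have hnl : t ^ 3 ≤ n / l := by
    rw [le_div_iff₀ hl0, ← htn]
    nlinarith [pow_pos (by linarith : 0 < t) 3]
  have hlog2 : l / Real.log 2 ≤ 1.5 * t := by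
    rw [div_le_iff₀ (by linarith)]
    nlinarith
  have hc' : (Nat.primeCounting (2 * n) : ℝ) ≤ (Qs n).card + Nat.sqrt (2 * n) := by
    exact_mod_cast hc
  have : 1.5 * t ^ 2 + 9 + 6 * t ≤ 0.3 * t ^ 3 := by nlinarith [sq_nonneg t]
  linarith

/-! ### Conclusion -/

theorem sup_remainder_large (e : ℕ → ℝ)
    (he : ∀ n : ℕ, 2 ≤ n →
      HasDensity (setOfMultiples {a : ℕ | n ≤ a ∧ a ≤ 2 * n}) (e n)) :
    ∀ ε : ℝ, 0 < ε → ∃ n₀ : ℕ, ∀ n : ℕ, n₀ ≤ n →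
      (2 : ℝ) ^ ((1 - ε) * (n : ℝ) / (2 * Real.log n)) ≤
        sSup {y : ℝ | ∃ x : ℝ, 1 ≤ x ∧ y = |(Mcount n x : ℝ) - e n * x|} := by
  intro ε hε
  obtain ⟨n₁, hn₁⟩ := eventually_atTop.mp card_Qs_large
  refine ⟨max n₁ 2, fun n hn => ?_⟩
  have hn2 : 2 ≤ n := (le_max_right _ _).trans hn
  have hq := hn₁ n ((le_max_left _ _).trans hn)
  have hδ := density_eq hn2 (he n hn2)
  set δ := e n
  set L := (∏ p ∈ Qs n, p) * Ws n with hL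
  have hL0 : 0 < L := period_pos n
  set S : ℕ → ℝ := fun k => (Mcount n (k : ℝ) : ℝ) - δ * k with hS
  have hSper : Function.Periodic S L := by
    intro k
    simp only [hS]
    rw [hL, Mcount_add_period (by omega), ← hL]
    push_cast at hδ ⊢
    linarith
  set Y := {y : ℝ | ∃ x : ℝ, 1 ≤ x ∧ y = |(Mcount n x : ℝ) - δ * x|} with hY
  have hbdd : BddAbove Y := by
    refine ⟨∑ k ∈ Finset.range L, |S k| + |δ|, ?_⟩
    rintro y ⟨x, hx, rfl⟩
    have h1 : Mcount n x = Mcount n ((⌊x⌋₊ : ℕ) : ℝ) := by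
      unfold Mcount; rw [Nat.floor_natCast]
    have h2 : |S ⌊x⌋₊| ≤ ∑ k ∈ Finset.range L, |S k| := by
      rw [← hSper.map_mod_nat]
      exact Finset.single_le_sum (f := fun k => |S k|) (fun _ _ => abs_nonneg _)
        (Finset.mem_range.mpr (Nat.mod_lt _ hL0))
    have h3 : |δ * (x - ⌊x⌋₊)| ≤ |δ| := by
      rw [abs_mul]
      refine mul_le_of_le_one_right (abs_nonneg _) ?_
      have := Nat.floor_le (zero_le_one.trans hx)
      have := Nat.lt_floor_add_one x
      rw [abs_le]; constructor <;> linarith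
    calc |(Mcount n x : ℝ) - δ * x| = |S ⌊x⌋₊ - δ * (x - ⌊x⌋₊)| := by
          rw [h1]; simp only [hS]; congr 1; ring
      _ ≤ |S ⌊x⌋₊| + |δ * (x - ⌊x⌋₊)| := abs_sub _ _
      _ ≤ _ := add_le_add h2 h3
  have hB : ∀ k : ℕ, |(Mcount n (k : ℝ) : ℝ) - δ * k| ≤ sSup Y := by
    intro k
    -- shift by one period, since only arguments `x ≥ 1` enter the supremum
    have h1 : S k = S (k + L) := (hSper k).symm
    change |S k| ≤ _
    rw [h1]
    refine le_csSup hbdd ⟨((k + L : ℕ) : ℝ), ?_, rfl⟩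
    exact_mod_cast (by omega : 1 ≤ k + L)
  have hmain := remainder_bound hn2 hδ hB
  have hB0 : 0 ≤ sSup Y := (abs_nonneg _).trans (hB 0)
  have hn0 : (0 : ℝ) < n := by exact_mod_cast (by omega : 0 < n)
  have hlog0 : 0 < Real.log n := Real.log_pos (by exact_mod_cast (by omega : 1 < n))
  refine abs_le_of_sq_le_sq' ?_ hB0 |>.2
  have hq1 : 1 ≤ (Qs n).card := by
    have h0 : (0 : ℝ) < (Qs n).card := by
      refine lt_of_lt_of_le ?_ hq
      have := Real.log_pos one_lt_two
      positivity
    exact_mod_cast h0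
  have h1 : (2 : ℝ) ^ ((Qs n).card - 1 : ℝ) ≤ (16 * n ^ 2 * sSup Y) ^ 2 := by
    have e1 : (2 : ℝ) ^ ((Qs n).card - 1 : ℝ) * 2 = 2 ^ (Qs n).card := by
      rw [Real.rpow_sub_one two_ne_zero, Real.rpow_natCast]; field_simp
    have e2 : (2 : ℝ) ≤ 2 ^ (Qs n).card := le_self_pow₀ one_le_two (by omega)
    have e3 : (4 * Real.pi * n ^ 2 * sSup Y) ^ 2 ≤ (16 * n ^ 2 * sSup Y) ^ 2 := by
      gcongr
      linarith [Real.pi_le_four]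
    linarith
  have h2 : (2 : ℝ) ^ ((n : ℝ) / Real.log n) * (16 * n ^ 2) ^ 2 ≤ 2 ^ ((Qs n).card - 1 : ℝ) := by
    have e1 : ((16 : ℝ) * n ^ 2) ^ 2 = 2 ^ (8 + 4 * (Real.log n / Real.log 2)) := by
      rw [Real.rpow_add two_pos, mul_comm (4 : ℝ), Real.rpow_mul two_pos.le]
      have : (2 : ℝ) ^ (Real.log n / Real.log 2) = n := by
        rw [Real.rpow_def_of_pos two_pos,
          mul_div_cancel₀ _ (Real.log_pos one_lt_two).ne', Real.exp_log hn0]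
      rw [this]
      norm_num
      ring
    rw [e1, ← Real.rpow_add two_pos]
    exact Real.rpow_le_rpow_of_exponent_le one_le_two (by linarith)
  have h3 : ((2 : ℝ) ^ ((1 - ε) * (n : ℝ) / (2 * Real.log n))) ^ 2
      ≤ (2 : ℝ) ^ ((n : ℝ) / Real.log n) := by
    rw [← Real.rpow_natCast, ← Real.rpow_mul two_pos.le]
    refine Real.rpow_le_rpow_of_exponent_le one_le_two ?_
    have : (1 - ε) * (n : ℝ) / (2 * Real.log n) * ((2 : ℕ) : ℝ)
        = (1 - ε) * (n / Real.log n) := by push_cast; field_simp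
    rw [this]
    have : 0 < n / Real.log n := by positivity
    nlinarith
  have h4 : (2 : ℝ) ^ ((n : ℝ) / Real.log n) * (16 * n ^ 2) ^ 2
      ≤ sSup Y ^ 2 * (16 * n ^ 2) ^ 2 := by
    calc _ ≤ _ := h2.trans h1
      _ = _ := by ring
  exact h3.trans (le_of_mul_le_mul_right h4 (by positivity))
end

section
/- For any two sets A and B of positive integers, 1 − d̲M(A ∪ B) ≥ (1 − d̲M(A))·(1 − d̲M(B)), where d̲ denotes lower natural density and M(·) the set of multiples. -/
/-!
For `s > 1`, give `n ≥ 1` the probability `n^{-s} / ζ(s)` and write `P_s` for the resulting law.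
Sets of multiples are closed under passing to multiples, and three facts about `P_s` suffice.

* Such sets are positively correlated: `P_s(U) P_s(V) ≤ P_s(U ∩ V)`. The weight `n^{-s}` is
  log-modular on the distributive lattice of natural numbers under divisibility, so this is an
  instance of the four functions theorem (`dmass_correlation`).
* If `U` is closed under multiples, then `P_s(U)` is at most the lower density of `U`
  (`dmass_div_le_lowerDensity`). Put `t = s - 1 > 0`. The constant function `1` is the Dirichlet
  convolution of `n^{-t}` with the nonnegative function `g(n) = ∏_{p ∣ n} (1 - p^{-t})`, whose
  mean value is `1 / ζ(s)`. Restricting the first factor to `U` gives a function which is at most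
  the indicator of `U` and has mean value `∑_{n ∈ U} n^{-s} / ζ(s) = P_s(U)`.
* For an arbitrary set `S`, the lower limit of `P_s(S)` as `s` decreases to `1` is at least the
  lower density of `S`; this is summation by parts (`exists_dmass_lower`).

Write `α`, `β`, `γ` for the lower densities of the sets of multiples `U` of `A`, `V` of `B` and
`U ∪ V` of `A ∪ B`. By the first two facts,
`1 - P_s(U ∪ V) ≥ (1 - P_s(U)) (1 - P_s(V)) ≥ (1 - α) (1 - β)` for every `s > 1`, and by the third
`P_s(U ∪ V)` is at least `γ` up to an error tending to `0` as `s` decreases to `1`. In this way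
the existence of logarithmic densities of sets of multiples is never needed.
-/

open Filter Topology
open scoped Classical

/-- The lower natural density of `S`. -/
noncomputable def lowerDensity (S : Set ℕ) : ℝ :=
  liminf (fun N : ℕ => (countIn S N : ℝ) / N) atTop

/-! ### The divisibility lattice -/

/-- The natural numbers ordered by divisibility, with `gcd` as meet and `lcm` as join;
`0` is the top element. -/
structure DivNat where
  /-- The underlying natural number. -/
  val : ℕ

theorem DivNat.val_injective : Function.Injective DivNat.val := fun ⟨_⟩ ⟨_⟩ h => by
  cases h; rfl

theorem gcd_lcm_dvd (a b c : ℕ) :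
    Nat.gcd a (Nat.lcm b c) ∣ Nat.lcm (Nat.gcd a b) (Nat.gcd a c) := by
  rcases eq_or_ne a 0 with rfl | ha
  · simp
  rcases eq_or_ne b 0 with rfl | hb
  · simpa using Nat.dvd_lcm_left a _
  rcases eq_or_ne c 0 with rfl | hc
  · simpa using Nat.dvd_lcm_right _ a
  have hbc := Nat.lcm_ne_zero hb hc
  have hab := Nat.gcd_ne_zero_left (n := b) ha
  have hac := Nat.gcd_ne_zero_left (n := c) ha
  rw [← Nat.factorization_le_iff_dvd (Nat.gcd_ne_zero_left ha) (Nat.lcm_ne_zero hab hac),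
    Nat.factorization_gcd ha hbc, Nat.factorization_lcm hb hc, Nat.factorization_lcm hab hac,
    Nat.factorization_gcd ha hb, Nat.factorization_gcd ha hc]
  intro p
  simp only [Finsupp.inf_apply, Finsupp.sup_apply]
  exact (inf_sup_left _ _ _).le

instance : Lattice DivNat where
  le a b := a.val ∣ b.val
  le_refl a := dvd_refl a.val
  le_trans _ _ _ h₁ h₂ := Nat.dvd_trans h₁ h₂
  le_antisymm _ _ h₁ h₂ := DivNat.val_injective (Nat.dvd_antisymm h₁ h₂)
  sup a b := ⟨Nat.lcm a.val b.val⟩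
  inf a b := ⟨Nat.gcd a.val b.val⟩
  le_sup_left a b := Nat.dvd_lcm_left a.val b.val
  le_sup_right a b := Nat.dvd_lcm_right a.val b.val
  sup_le _ _ _ h₁ h₂ := Nat.lcm_dvd h₁ h₂
  inf_le_left a b := Nat.gcd_dvd_left a.val b.val
  inf_le_right a b := Nat.gcd_dvd_right a.val b.val
  le_inf _ _ _ h₁ h₂ := Nat.dvd_gcd h₁ h₂

instance : DistribLattice DivNat :=
  DistribLattice.ofInfSupLe fun a b c => gcd_lcm_dvd a.val b.val c.val

/-! ### Dirichlet masses and their correlation -/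

/-- `S` is closed under passing to nonzero multiples. -/
def MulClosed (S : Set ℕ) : Prop := ∀ n ∈ S, ∀ m : ℕ, m ≠ 0 → n ∣ m → m ∈ S

/-- The Dirichlet mass `∑_{n ∈ S} n^{-s}`; the term `n = 0` vanishes for `s ≠ 0`. -/
noncomputable def dmass (s : ℝ) (S : Set ℕ) : ℝ :=
  ∑' n : ℕ, S.indicator (fun n : ℕ => (n : ℝ) ^ (-s)) n

theorem weight_nonneg (s : ℝ) (n : ℕ) : 0 ≤ (n : ℝ) ^ (-s) := by positivity

theorem indicator_weight_nonneg (s : ℝ) (S : Set ℕ) (n : ℕ) :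
    0 ≤ S.indicator (fun n : ℕ => (n : ℝ) ^ (-s)) n :=
  Set.indicator_nonneg (fun n _ => weight_nonneg s n) n

theorem summable_weight {s : ℝ} (hs : 1 < s) : Summable (fun n : ℕ => (n : ℝ) ^ (-s)) :=
  Real.summable_nat_rpow.2 (by linarith)

theorem summable_indicator_weight {s : ℝ} (hs : 1 < s) (S : Set ℕ) :
    Summable (S.indicator (fun n : ℕ => (n : ℝ) ^ (-s))) :=
  (summable_weight hs).indicator S

theorem dmass_nonneg (s : ℝ) (S : Set ℕ) : 0 ≤ dmass s S :=
  tsum_nonneg (indicator_weight_nonneg s S)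

theorem one_le_dmass_univ {s : ℝ} (hs : 1 < s) : 1 ≤ dmass s Set.univ := by
  have := (summable_indicator_weight hs Set.univ).le_tsum 1
    (fun n _ => indicator_weight_nonneg s Set.univ n)
  simpa [dmass] using this

/-- Finite form of the correlation inequality: the weight `n ↦ n^{-s}` is log-modular on the
divisibility lattice because `gcd(a,b) * lcm(a,b) = a * b`, so the four functions theorem
applies. -/
theorem finset_correlation {s : ℝ} (hs : 1 < s) {U V : Set ℕ} (hU : MulClosed U)
    (hV : MulClosed V) (T : Finset DivNat) :
    (∑ a ∈ T, U.indicator (fun n : ℕ => (n : ℝ) ^ (-s)) a.val) *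
      (∑ a ∈ T, V.indicator (fun n : ℕ => (n : ℝ) ^ (-s)) a.val) ≤
    dmass s Set.univ * dmass s (U ∩ V) := by
  classical
  have key := four_functions_theorem
    (f₁ := fun a : DivNat => U.indicator (fun n : ℕ => (n : ℝ) ^ (-s)) a.val)
    (f₂ := fun a : DivNat => V.indicator (fun n : ℕ => (n : ℝ) ^ (-s)) a.val)
    (f₃ := fun a : DivNat => Set.univ.indicator (fun n : ℕ => (n : ℝ) ^ (-s)) a.val)
    (f₄ := fun a : DivNat => (U ∩ V).indicator (fun n : ℕ => (n : ℝ) ^ (-s)) a.val)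
    (fun a => indicator_weight_nonneg s _ _) (fun a => indicator_weight_nonneg s _ _)
    (fun a => indicator_weight_nonneg s _ _) (fun a => indicator_weight_nonneg s _ _)
    (fun a b => by
      by_cases ha : a.val ∈ U; swap
      · simp only [Set.indicator_of_notMem ha, zero_mul]
        exact mul_nonneg (indicator_weight_nonneg s _ _) (indicator_weight_nonneg s _ _)
      by_cases hb : b.val ∈ V; swap
      · simp only [Set.indicator_of_notMem hb, mul_zero]
        exact mul_nonneg (indicator_weight_nonneg s _ _) (indicator_weight_nonneg s _ _)
      have h0 : ((0 : ℕ) : ℝ) ^ (-s) = 0 := by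
        rw [Nat.cast_zero, Real.zero_rpow (by linarith)]
      rcases eq_or_ne a.val 0 with h | ha0
      · rw [h] at ha ⊢
        rw [Set.indicator_of_mem ha, h0, zero_mul]
        exact mul_nonneg (indicator_weight_nonneg s _ _) (indicator_weight_nonneg s _ _)
      rcases eq_or_ne b.val 0 with h | hb0
      · rw [h] at hb ⊢
        rw [Set.indicator_of_mem hb, h0, mul_zero]
        exact mul_nonneg (indicator_weight_nonneg s _ _) (indicator_weight_nonneg s _ _)
      have hl := Nat.lcm_ne_zero ha0 hb0
      have hmem : Nat.lcm a.val b.val ∈ U ∩ V :=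
        ⟨hU _ ha _ hl (Nat.dvd_lcm_left _ _), hV _ hb _ hl (Nat.dvd_lcm_right _ _)⟩
      change _ ≤ Set.univ.indicator (fun n : ℕ => (n : ℝ) ^ (-s)) (Nat.gcd a.val b.val) *
        (U ∩ V).indicator (fun n : ℕ => (n : ℝ) ^ (-s)) (Nat.lcm a.val b.val)
      rw [Set.indicator_of_mem ha, Set.indicator_of_mem hb, Set.indicator_of_mem hmem,
        Set.indicator_of_mem (Set.mem_univ _), ← Real.mul_rpow (by positivity) (by positivity),
        ← Real.mul_rpow (by positivity) (by positivity), ← Nat.cast_mul, ← Nat.cast_mul,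
        Nat.gcd_mul_lcm])
    T T
  have aux : ∀ (S : Set ℕ) (R : Finset DivNat),
      ∑ a ∈ R, S.indicator (fun n : ℕ => (n : ℝ) ^ (-s)) a.val ≤ dmass s S := by
    intro S R
    have h := Finset.sum_map R ⟨DivNat.val, DivNat.val_injective⟩
      (fun n => S.indicator (fun n : ℕ => (n : ℝ) ^ (-s)) n)
    refine h.symm.trans_le ?_
    exact (summable_indicator_weight hs S).sum_le_tsum _
      (fun n _ => indicator_weight_nonneg s S n)
  refine key.trans (mul_le_mul (aux _ _) (aux _ _) ?_ (dmass_nonneg _ _))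
  exact Finset.sum_nonneg fun a _ => indicator_weight_nonneg s _ _

/-- Positive correlation of sets closed under multiples under the law `n^{-s} / ζ(s)`. -/
theorem dmass_correlation {s : ℝ} (hs : 1 < s) {U V : Set ℕ} (hU : MulClosed U)
    (hV : MulClosed V) :
    dmass s U * dmass s V ≤ dmass s Set.univ * dmass s (U ∩ V) := by
  have h : ∀ S : Set ℕ, Tendsto
      (fun N => ∑ n ∈ Finset.range N, S.indicator (fun n : ℕ => (n : ℝ) ^ (-s)) n) atTop
      (𝓝 (dmass s S)) := fun S => (summable_indicator_weight hs S).hasSum.tendsto_sum_nat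
  refine le_of_tendsto ((h U).mul (h V)) (Eventually.of_forall fun N => ?_)
  have := finset_correlation hs hU hV
    ((Finset.range N).map ⟨DivNat.mk, fun a b h => by cases h; rfl⟩)
  rw [Finset.sum_map, Finset.sum_map] at this
  exact this

theorem dmass_union_add_inter {s : ℝ} (hs : 1 < s) (U V : Set ℕ) :
    dmass s (U ∪ V) + dmass s (U ∩ V) = dmass s U + dmass s V := by
  unfold dmass
  rw [← (summable_indicator_weight hs _).tsum_add (summable_indicator_weight hs _),
    ← (summable_indicator_weight hs _).tsum_add (summable_indicator_weight hs _)]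
  exact tsum_congr fun n => Set.indicator_union_add_inter_apply _ U V n

/-! ### Mean values of Dirichlet convolutions -/

open ArithmeticFunction ArithmeticFunction.zeta ArithmeticFunction.Moebius in
/-- If `g` has mean value `c` and `∑ |h(d)| / d` converges, the Dirichlet convolution `h * g`
has mean value `c * ∑ h(d) / d`. -/
theorem mean_mul {h g : ArithmeticFunction ℝ} {c : ℝ}
    (hg : Tendsto (fun N : ℕ => (∑ n ∈ Finset.Ioc 0 N, g n) / (N : ℝ)) atTop (𝓝 c))
    (hh : Summable fun d : ℕ => |h d| / (d : ℝ)) :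
    Tendsto (fun N : ℕ => (∑ n ∈ Finset.Ioc 0 N, (h * g) n) / (N : ℝ)) atTop
      (𝓝 (c * ∑' d : ℕ, h d / (d : ℝ))) := by
  set G : ℕ → ℝ := fun N => (∑ n ∈ Finset.Ioc 0 N, g n) with hG
  have hrepr : ∀ N : ℕ, (∑ n ∈ Finset.Ioc 0 N, (h * g) n) / (N : ℝ) =
      ∑' d : ℕ, h d * (G (N / d) / N) := by
    intro N
    rw [sum_Ioc_mul_eq_sum_sum, tsum_eq_sum (s := Finset.Ioc 0 N), Finset.sum_div]
    · exact Finset.sum_congr rfl fun d _ => by rw [mul_div_assoc]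
    · intro d hd
      rcases Nat.eq_zero_or_pos d with rfl | hd0
      · simp
      have : N < d := by simpa [hd0] using hd
      simp [hG, Nat.div_eq_of_lt this]
  simp_rw [hrepr]
  obtain ⟨C, hC⟩ := (Metric.isBounded_range_of_tendsto _ hg).exists_norm_le
  have hGC : ∀ N : ℕ, |G N| ≤ C * N := by
    intro N
    rcases Nat.eq_zero_or_pos N with rfl | hN
    · simp [hG]
    have := hC _ ⟨N, rfl⟩
    rw [Real.norm_eq_abs, abs_div, Nat.abs_cast] at this
    rwa [div_le_iff₀ (by positivity)] at this
  have hC0 : 0 ≤ C := by simpa using (abs_nonneg _).trans (hGC 1)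
  rw [← tsum_mul_left]
  refine tendsto_tsum_of_dominated_convergence (bound := fun d : ℕ => C * (|h d| / d))
    (hh.mul_left C) ?_ ?_
  · intro d
    rcases Nat.eq_zero_or_pos d with rfl | hd
    · simp
    have hdiv : Tendsto (fun N : ℕ => N / d) atTop atTop := Nat.tendsto_div_const_atTop hd.ne'
    have h1 : Tendsto (fun N : ℕ => (((N / d : ℕ) : ℝ)) / N) atTop (𝓝 (1 / (d : ℝ))) := by
      have := (tendsto_nat_floor_mul_div_atTop (R := ℝ) (a := 1 / (d : ℝ))
        (by positivity)).comp tendsto_natCast_atTop_atTop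
      refine this.congr fun N => ?_
      simp only [Function.comp]
      rw [one_div_mul_eq_div, Nat.floor_div_eq_div]
    have h2 := ((hg.comp hdiv).mul h1).const_mul (h d)
    have h3 : h d * (c * (1 / (d : ℝ))) = c * (h d / d) := by ring
    rw [h3] at h2
    refine h2.congr' ?_
    filter_upwards [hdiv.eventually_ge_atTop 1] with N hN
    have : ((N / d : ℕ) : ℝ) ≠ 0 := by positivity
    simp only [Function.comp, hG]
    rw [div_mul_div_cancel₀ this]
  · refine Eventually.of_forall fun N d => ?_
    rw [norm_mul, Real.norm_eq_abs, Real.norm_eq_abs, abs_div, Nat.abs_cast]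
    rcases Nat.eq_zero_or_pos N with rfl | hN
    · simp; positivity
    have h1 : |G (N / d)| / N ≤ C / d := by
      rw [div_le_iff₀ (by positivity)]
      calc |G (N / d)| ≤ C * ((N / d : ℕ) : ℝ) := hGC _
        _ ≤ C * ((N : ℝ) / d) := by gcongr; exact Nat.cast_div_le
        _ = C / d * N := by ring
    calc |h d| * (|G (N / d)| / N) ≤ |h d| * (C / d) := by gcongr
      _ = C * (|h d| / d) := by ring

/-! ### Factoring the constant function `1` -/

/-- The arithmetic function `n ↦ n^{-t}` on `S`, and `0` off `S`. -/
noncomputable def powOn (t : ℝ) (S : Set ℕ) : ArithmeticFunction ℝ :=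
  ⟨fun n => if n = 0 then 0 else S.indicator (fun n : ℕ => (n : ℝ) ^ (-t)) n, by simp⟩

/-- The arithmetic function `n ↦ μ(n) n^{-t}`. -/
noncomputable def moebiusPow (t : ℝ) : ArithmeticFunction ℝ :=
  ⟨fun n => (ArithmeticFunction.moebius n : ℝ) * (n : ℝ) ^ (-t), by simp⟩

open ArithmeticFunction ArithmeticFunction.zeta ArithmeticFunction.Moebius in
/-- `n^{-t}` and `μ(n) n^{-t}` are inverse under Dirichlet convolution, because `n ↦ n^{-t}` is
completely multiplicative. -/
theorem powOn_mul_moebiusPow (t : ℝ) : powOn t Set.univ * moebiusPow t = 1 := by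
  ext n
  rcases eq_or_ne n 0 with rfl | hn
  · simp
  have h1 : (powOn t Set.univ * moebiusPow t) n =
      ((ζ : ArithmeticFunction ℝ) * (μ : ArithmeticFunction ℝ)) n * (n : ℝ) ^ (-t) := by
    rw [mul_apply, mul_apply, Finset.sum_mul]
    refine Finset.sum_congr rfl fun x hx => ?_
    obtain ⟨hx, -⟩ := Nat.mem_divisorsAntidiagonal.1 hx
    have h1 : x.1 ≠ 0 := by rintro h; simp [h] at hx; exact hn hx.symm
    rw [← hx, Nat.cast_mul, Real.mul_rpow (by positivity) (by positivity)]
    simp [powOn, moebiusPow, h1]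
    ring
  rw [h1, coe_zeta_mul_coe_moebius]
  rcases eq_or_ne n 1 with rfl | h
  · simp
  · simp [one_apply_ne h]

open ArithmeticFunction ArithmeticFunction.zeta ArithmeticFunction.Moebius in
theorem isMultiplicative_moebiusPow (t : ℝ) : (moebiusPow t).IsMultiplicative := by
  refine ⟨by simp [moebiusPow], fun {m n} hmn => ?_⟩
  simp only [moebiusPow, coe_mk]
  rw [isMultiplicative_moebius.map_mul_of_coprime hmn, Nat.cast_mul,
    Real.mul_rpow (by positivity) (by positivity)]
  push_cast
  ring

open ArithmeticFunction ArithmeticFunction.zeta ArithmeticFunction.Moebius in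
/-- The convolution of `μ(n) n^{-t}` with `1` is `n ↦ ∏_{p ∣ n} (1 - p^{-t})`, hence is
nonnegative. -/
theorem moebiusPow_mul_zeta_nonneg {t : ℝ} (ht : 0 < t) (n : ℕ) :
    0 ≤ (moebiusPow t * (ζ : ArithmeticFunction ℝ)) n := by
  have hmul : (moebiusPow t * (ζ : ArithmeticFunction ℝ)).IsMultiplicative :=
    (isMultiplicative_moebiusPow t).mul isMultiplicative_zeta.natCast
  rcases eq_or_ne n 0 with rfl | hn
  · simp
  rw [hmul.multiplicative_factorization _ hn]
  refine Finset.prod_nonneg fun p hp => ?_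
  have hp : p.Prime := Nat.prime_of_mem_primeFactors hp
  beta_reduce
  rw [coe_mul_zeta_apply, Nat.sum_divisors_prime_pow hp, Finset.sum_range_succ']
  rcases Nat.eq_zero_or_pos (n.factorization p) with h | h
  · simp [h, moebiusPow]
  obtain ⟨k, hk⟩ : ∃ k, n.factorization p = k + 1 := ⟨_, (Nat.succ_pred_eq_of_pos h).symm⟩
  rw [hk, Finset.sum_range_succ', Finset.sum_eq_zero]
  · have : (p : ℝ) ^ (-t) ≤ 1 :=
      Real.rpow_le_one_of_one_le_of_nonpos (by exact_mod_cast hp.one_le) (by linarith)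
    simp [moebiusPow, moebius_apply_prime hp]
    linarith
  · intro i _
    simp [moebiusPow, moebius_apply_prime_pow hp]

theorem powOn_div (s : ℝ) (S : Set ℕ) (hs : 1 < s) (n : ℕ) :
    powOn (s - 1) S n / n = S.indicator (fun n : ℕ => (n : ℝ) ^ (-s)) n := by
  rcases Nat.eq_zero_or_pos n with rfl | hn
  · have h0 : ((0 : ℕ) : ℝ) ^ (-s) = 0 := by
      rw [Nat.cast_zero, Real.zero_rpow (by linarith)]
    rw [Set.indicator_apply, h0]
    simp
  by_cases h : n ∈ S
  · simp only [powOn, ArithmeticFunction.coe_mk, hn.ne', if_false, Set.indicator_of_mem h]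
    rw [div_eq_iff (by positivity), ← Real.rpow_add_one (by positivity)]
    congr 1; ring
  · simp [powOn, h]

theorem powOn_nonneg (t : ℝ) (S : Set ℕ) (n : ℕ) : 0 ≤ powOn t S n := by
  simp only [powOn, ArithmeticFunction.coe_mk]
  split_ifs
  · exact le_rfl
  · exact indicator_weight_nonneg t S n

theorem summable_powOn {s : ℝ} (hs : 1 < s) (S : Set ℕ) :
    Summable fun d : ℕ => |powOn (s - 1) S d| / (d : ℝ) := by
  refine (summable_indicator_weight hs S).congr fun d => ?_
  rw [abs_of_nonneg (powOn_nonneg _ _ _), powOn_div s S hs]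

theorem summable_moebiusPow {s : ℝ} (hs : 1 < s) :
    Summable fun d : ℕ => |moebiusPow (s - 1) d| / (d : ℝ) := by
  refine Summable.of_nonneg_of_le (fun d => by positivity) (fun d => ?_)
    (summable_powOn hs Set.univ)
  rcases Nat.eq_zero_or_pos d with rfl | hd
  · simp
  refine div_le_div_of_nonneg_right ?_ (Nat.cast_nonneg d)
  simp only [powOn, moebiusPow, ArithmeticFunction.coe_mk, hd.ne', if_false, Set.indicator_univ]
  rw [abs_mul]
  have : |(ArithmeticFunction.moebius d : ℝ)| ≤ 1 := by
    exact_mod_cast ArithmeticFunction.abs_moebius_le_one (n := d)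
  exact mul_le_of_le_one_left (abs_nonneg _) this

/-! ### Dirichlet mass against lower density -/

theorem sum_Ioc_indicator (S : Set ℕ) (N : ℕ) :
    ∑ n ∈ Finset.Ioc 0 N, S.indicator (fun _ => (1 : ℝ)) n = countIn S N := by
  rw [countIn, Finset.card_filter]
  push_cast
  refine Finset.sum_congr (by ext; simp [Nat.succ_le_iff]) fun n _ => ?_
  simp [Set.indicator_apply]

open ArithmeticFunction ArithmeticFunction.zeta ArithmeticFunction.Moebius in
/-- The indicator of a set closed under multiples dominates the convolution of
`1_S(n) n^{-t}` with the nonnegative function `∏_{p ∣ n} (1 - p^{-t})`, since all multiples of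
elements of `S` stay in `S`, and without the restriction to `S` the convolution is `1`. -/
theorem convolution_le_indicator {t : ℝ} (ht : 0 < t) {S : Set ℕ} (hS : MulClosed S) {n : ℕ}
    (hn : n ≠ 0) :
    (powOn t S * (moebiusPow t * (ζ : ArithmeticFunction ℝ))) n ≤
      S.indicator (fun _ => (1 : ℝ)) n := by
  have hle : ∀ d, powOn t S d ≤ powOn t Set.univ d := by
    intro d
    simp only [powOn, coe_mk]
    split_ifs
    · exact le_rfl
    · exact Set.indicator_le_indicator_of_subset (Set.subset_univ _)
        (fun n => weight_nonneg t n) d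
  by_cases hnS : n ∈ S
  · have h1 : (powOn t Set.univ * (moebiusPow t * (ζ : ArithmeticFunction ℝ))) n = 1 := by
      rw [← mul_assoc, powOn_mul_moebiusPow, one_mul]
      simp [hn]
    rw [Set.indicator_of_mem hnS, ← h1, mul_apply, mul_apply]
    exact Finset.sum_le_sum fun x _ =>
      mul_le_mul_of_nonneg_right (hle _) (moebiusPow_mul_zeta_nonneg ht _)
  · rw [Set.indicator_of_notMem hnS, mul_apply]
    refine (Finset.sum_eq_zero fun x hx => ?_).le
    have hx : x.1 ∉ S := fun h =>
      hnS (hS _ h _ hn ⟨x.2, (Nat.mem_divisorsAntidiagonal.1 hx).1.symm⟩)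
    simp [powOn, hx]

theorem countIn_le (S : Set ℕ) (N : ℕ) : countIn S N ≤ N := by
  simpa [countIn] using Finset.card_filter_le (Finset.Icc 1 N) (fun n => n ∈ S)

theorem countIn_div_le_one (S : Set ℕ) (N : ℕ) : (countIn S N : ℝ) / N ≤ 1 :=
  div_le_one_of_le₀ (by exact_mod_cast countIn_le S N) (by positivity)

theorem isBoundedUnder_countIn (S : Set ℕ) :
    IsBoundedUnder (· ≥ ·) atTop (fun N : ℕ => (countIn S N : ℝ) / N) :=
  isBoundedUnder_of ⟨0, fun N => by positivity⟩

theorem isCoboundedUnder_countIn (S : Set ℕ) :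
    IsCoboundedUnder (· ≥ ·) atTop (fun N : ℕ => (countIn S N : ℝ) / N) :=
  (isBoundedUnder_of ⟨1, fun N => countIn_div_le_one S N⟩ :
    IsBoundedUnder (· ≤ ·) atTop (fun N : ℕ => (countIn S N : ℝ) / N)).isCoboundedUnder_ge

theorem lowerDensity_le_one (S : Set ℕ) : lowerDensity S ≤ 1 := by
  refine liminf_le_of_le (isBoundedUnder_countIn S) fun b hb => ?_
  obtain ⟨N, hN⟩ := hb.exists
  exact hN.trans (countIn_div_le_one S N)

open ArithmeticFunction ArithmeticFunction.zeta ArithmeticFunction.Moebius in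
/-- The mass of a set closed under multiples under `n^{-s} / ζ(s)` is at most its lower
density. -/
theorem dmass_div_le_lowerDensity {s : ℝ} (hs : 1 < s) {S : Set ℕ} (hS : MulClosed S) :
    dmass s S / dmass s Set.univ ≤ lowerDensity S := by
  have hZ := one_le_dmass_univ hs
  have hzeta : Tendsto
      (fun N : ℕ => (∑ n ∈ Finset.Ioc 0 N, (ζ : ArithmeticFunction ℝ) n) / (N : ℝ))
      atTop (𝓝 1) := by
    refine (tendsto_const_nhds (x := (1 : ℝ))).congr' ?_
    filter_upwards [eventually_ge_atTop 1] with N hN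
    have h : ∑ n ∈ Finset.Ioc 0 N, (ζ : ArithmeticFunction ℝ) n = N := by
      simp_rw [natCoe_apply]
      exact_mod_cast sum_Ioc_zeta N
    rw [h, div_self (by positivity)]
  have hg := mean_mul hzeta (summable_moebiusPow hs)
  set c := 1 * ∑' d : ℕ, moebiusPow (s - 1) d / (d : ℝ)
  have hsum : ∀ T : Set ℕ, ∑' d : ℕ, powOn (s - 1) T d / (d : ℝ) = dmass s T := fun T =>
    tsum_congr fun d => powOn_div s T hs d
  -- The mean value `c` of `∏_{p ∣ n} (1 - p^{1-s})` is `1 / ζ(s)`, by comparing mean values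
  -- in the factorization of `1` as the convolution of `n^{1-s}` with this function.
  have hc : c * dmass s Set.univ = 1 := by
    have h := mean_mul hg (summable_powOn hs Set.univ)
    rw [hsum, ← mul_assoc, powOn_mul_moebiusPow, one_mul] at h
    exact tendsto_nhds_unique h hzeta
  have h := mean_mul hg (summable_powOn hs S)
  rw [hsum] at h
  have hval : dmass s S / dmass s Set.univ = c * dmass s S := by
    rw [div_eq_iff (by positivity)]
    linear_combination -(dmass s S) * hc
  rw [hval, ← h.liminf_eq]
  refine liminf_le_liminf (Eventually.of_forall fun N => ?_) h.isBoundedUnder_ge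
    (isCoboundedUnder_countIn S)
  rw [← sum_Ioc_indicator]
  gcongr with n hn
  exact convolution_le_indicator (by linarith) hS (Finset.mem_Ioc.1 hn).1.ne'

/-- Summation by parts: partial sums bounded below by `-K` and an antitone weight. -/
theorem abel_lower {a b : ℕ → ℝ} {K : ℝ} (hb : ∀ n, 1 ≤ n → b (n + 1) ≤ b n)
    (hE : ∀ N, -K ≤ ∑ n ∈ Finset.Ioc 0 N, a n) (N : ℕ) :
    -K * (b 1 - b (N + 1)) + (∑ n ∈ Finset.Ioc 0 (N + 1), a n) * b (N + 1) ≤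
      ∑ n ∈ Finset.Ioc 0 (N + 1), a n * b n := by
  induction N with
  | zero => simp
  | succ N ih =>
    have h := mul_nonneg (sub_nonneg.2 (hb (N + 1) (by omega))) (sub_nonneg.2 (hE (N + 1)))
    have h' := Finset.sum_Ioc_succ_top (Nat.zero_le (N + 1)) a
    have h'' := Finset.sum_Ioc_succ_top (Nat.zero_le (N + 1)) fun n => a n * b n
    rw [h', h'']
    linear_combination ih + h

/-- If `c` is below the lower density of `S`, the Dirichlet mass of `S` is at least `c ζ(s)` up to
an error bounded uniformly in `s`. -/
theorem exists_dmass_lower {S : Set ℕ} {c : ℝ} (hc : c < lowerDensity S) :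
    ∃ K : ℝ, ∀ s : ℝ, 1 < s → c * dmass s Set.univ - K ≤ dmass s S := by
  obtain ⟨N₀, hN₀⟩ := eventually_atTop.1
    (eventually_lt_of_lt_liminf hc (isBoundedUnder_countIn S))
  have hc1 : c ≤ 1 := hc.le.trans (lowerDensity_le_one S)
  have hE : ∀ N, -(N₀ : ℝ) ≤ ∑ n ∈ Finset.Ioc 0 N, (S.indicator (fun _ => (1 : ℝ)) n - c) := by
    intro N
    rw [Finset.sum_sub_distrib, sum_Ioc_indicator, Finset.sum_const, Nat.card_Ioc, Nat.sub_zero,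
      nsmul_eq_mul]
    rcases lt_or_ge N N₀ with h | h
    · have h' : (N : ℝ) ≤ N₀ := by exact_mod_cast h.le
      have : (0 : ℝ) ≤ countIn S N := by positivity
      have : (N : ℝ) * c ≤ N := mul_le_of_le_one_right (by positivity) hc1
      linarith
    · have h1 := hN₀ N h
      have h0 : (0 : ℝ) ≤ N₀ := by positivity
      rcases Nat.eq_zero_or_pos N with rfl | hN
      · have : (0 : ℝ) ≤ countIn S 0 := Nat.cast_nonneg _
        push_cast
        linarith
      rw [lt_div_iff₀ (by positivity)] at h1
      linarith
  refine ⟨N₀, fun s hs => ?_⟩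
  have hlim : Tendsto (fun N => ∑ n ∈ Finset.range (N + 1 + 1),
      (S.indicator (fun n : ℕ => (n : ℝ) ^ (-s)) n -
        c * Set.univ.indicator (fun n : ℕ => (n : ℝ) ^ (-s)) n)) atTop
      (𝓝 (dmass s S - c * dmass s Set.univ)) := by
    have := ((summable_indicator_weight hs S).hasSum.sub
      ((summable_indicator_weight hs Set.univ).hasSum.mul_left c)).tendsto_sum_nat
    exact this.comp (tendsto_add_atTop_nat 2)
  have := ge_of_tendsto hlim (b := -(N₀ : ℝ)) (Eventually.of_forall fun N => ?_)
  · linarith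
  have hmono : ∀ n : ℕ, 1 ≤ n → ((n + 1 : ℕ) : ℝ) ^ (-s) ≤ (n : ℝ) ^ (-s) := fun n hn =>
    Real.rpow_le_rpow_of_nonpos (by positivity) (by push_cast; linarith) (by linarith)
  have habel := abel_lower (b := fun n : ℕ => (n : ℝ) ^ (-s)) hmono hE N
  have h2 := mul_le_mul_of_nonneg_right (hE (N + 1)) (weight_nonneg s (N + 1))
  have h3 : ∑ n ∈ Finset.range (N + 1 + 1), (S.indicator (fun n : ℕ => (n : ℝ) ^ (-s)) n -
        c * Set.univ.indicator (fun n : ℕ => (n : ℝ) ^ (-s)) n) =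
      ∑ n ∈ Finset.Ioc 0 (N + 1), (S.indicator (fun _ => (1 : ℝ)) n - c) * (n : ℝ) ^ (-s) := by
    rw [Finset.sum_range_eq_add_Ico _ (by omega)]
    have h0 : ((0 : ℕ) : ℝ) ^ (-s) = 0 := by
      rw [Nat.cast_zero, Real.zero_rpow (by linarith)]
    simp only [Set.indicator_univ]
    simp only [Set.indicator_apply, h0, ite_self, mul_zero, sub_zero, zero_add]
    refine Finset.sum_congr (by ext; simp; omega) fun n _ => ?_
    split_ifs <;> ring
  rw [h3]
  refine le_trans ?_ habel
  simp only [Nat.cast_one, Real.one_rpow] at habel h2 ⊢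
  linarith

/-- The pole of the zeta function at `1`. -/
theorem tendsto_dmass_univ : Tendsto (fun s => dmass s Set.univ) (𝓝[>] 1) atTop := by
  have h1 : Tendsto (fun s : ℝ => (s - 1)⁻¹) (𝓝[>] 1) atTop := by
    refine tendsto_inv_nhdsGT_zero.comp ?_
    refine tendsto_nhdsWithin_of_tendsto_nhds_of_eventually_within _ ?_ ?_
    · have : Tendsto (fun s : ℝ => s - 1) (𝓝 1) (𝓝 (1 - 1)) := tendsto_id.sub_const 1
      rw [sub_self] at this
      exact this.mono_left nhdsWithin_le_nhds
    · filter_upwards [self_mem_nhdsWithin] with s hs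
      exact sub_pos.2 (Set.mem_Ioi.1 hs)
  refine (h1.atTop_mul_pos one_pos tendsto_sub_mul_tsum_nat_rpow).congr' ?_
  filter_upwards [self_mem_nhdsWithin] with s hs
  have : s - 1 ≠ 0 := (sub_pos.2 (Set.mem_Ioi.1 hs)).ne'
  rw [inv_mul_cancel_left₀ this]
  simp [dmass, Real.rpow_neg]

theorem mulClosed_setOfMultiples (A : Set ℕ) : MulClosed (setOfMultiples A) := by
  rintro n ⟨a, ha, m, -, rfl⟩ k hk ⟨j, rfl⟩
  refine ⟨a, ha, m * j, ?_, by ring⟩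
  rcases Nat.eq_zero_or_pos (m * j) with h | h
  · exact absurd (by rw [mul_right_comm, h, zero_mul]) hk
  · exact h

theorem setOfMultiples_union (A B : Set ℕ) :
    setOfMultiples (A ∪ B) = setOfMultiples A ∪ setOfMultiples B := by
  ext n
  simp only [setOfMultiples, Set.mem_union, Set.mem_ofPred_eq, or_and_right, exists_or]

/-! ### The inequality of lower densities -/

theorem behrend_inequality (A B : Set ℕ)
    (hA : ∀ a ∈ A, 0 < a) (hB : ∀ b ∈ B, 0 < b) :
    (1 - lowerDensity (setOfMultiples A)) * (1 - lowerDensity (setOfMultiples B)) ≤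
      1 - lowerDensity (setOfMultiples (A ∪ B)) := by
  rw [setOfMultiples_union]
  have hU := mulClosed_setOfMultiples A
  have hV := mulClosed_setOfMultiples B
  set U := setOfMultiples A
  set V := setOfMultiples B
  set α := lowerDensity U
  set β := lowerDensity V
  have hα : α ≤ 1 := lowerDensity_le_one U
  have hβ : β ≤ 1 := lowerDensity_le_one V
  suffices h : ∀ c < lowerDensity (U ∪ V), c ≤ 1 - (1 - α) * (1 - β) by
    have := le_of_forall_lt_imp_le_of_dense h
    linarith
  intro c hc
  -- As `s` decreases to `1`, the error `K / ζ(s)` vanishes.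
  obtain ⟨K, hK⟩ := exists_dmass_lower hc
  have hlim : Tendsto (fun s => c - K / dmass s Set.univ) (𝓝[>] 1) (𝓝 (c - 0)) :=
    tendsto_const_nhds.sub (tendsto_dmass_univ.const_div_atTop K)
  rw [sub_zero] at hlim
  refine le_of_tendsto hlim ?_
  filter_upwards [self_mem_nhdsWithin] with s hs
  have hs : 1 < s := hs
  have hZ : 0 < dmass s Set.univ := one_pos.trans_le (one_le_dmass_univ hs)
  have hu := dmass_div_le_lowerDensity hs hU
  have hv := dmass_div_le_lowerDensity hs hV
  have hcor := dmass_correlation hs hU hV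
  have hadd := dmass_union_add_inter hs U V
  have hlow := hK s hs
  set Z := dmass s Set.univ
  -- Normalised masses: `u`, `v` of `U`, `V`, and `w` of `U ∩ V`.
  obtain ⟨u, hu'⟩ : ∃ u, u = dmass s U / Z := ⟨_, rfl⟩
  obtain ⟨v, hv'⟩ : ∃ v, v = dmass s V / Z := ⟨_, rfl⟩
  obtain ⟨w, hw'⟩ : ∃ w, w = dmass s (U ∩ V) / Z := ⟨_, rfl⟩
  have hw : u * v ≤ w := by
    rw [hu', hv', hw', div_mul_div_comm, div_le_div_iff₀ (by positivity) hZ]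
    nlinarith
  have h1 : c - K / Z ≤ u + v - w := by
    rw [hu', hv', hw', ← add_div, ← sub_div, ← hadd, add_sub_cancel_right, le_div_iff₀ hZ, sub_mul,
      div_mul_cancel₀ _ hZ.ne']
    exact hlow
  rw [← hu'] at hu
  rw [← hv'] at hv
  have h2 : (1 - α) * (1 - β) ≤ (1 - u) * (1 - v) :=
    mul_le_mul (by linarith) (by linarith) (by linarith) (by linarith)
  nlinarith
end
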